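/- arXiv:1605.09430 — 6 statements merged into one kernel-verified Lean document; each statement's English description precedes it below -/
import Mathlib

section
/- Let (ϱ,ς) be a direction with ϱ > 0 and ϱ + ς < 0, and let R, G ∈ K[x,y] be (ϱ,ς)-homogeneous polynomials such that R is not a monomial and [G,R] = R^i for some integer i ≥ 1. Assume v_{ϱ,ς}(R) ≥ ϱ and, writing (α′,β′) := en_{ϱ,ς}(R), that α′ − 2β′ ≤ 0. Write (α,β) := st_{ϱ,ς}(R). If β < α and β ≤ (α − β − 1)², then β′ < α′ and β′ ≤ (α′ − β′ − 1)². -/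
open MvPolynomial

noncomputable section

variable {K : Type*} [Field K] [CharZero K]

/-- The support of `P` as a set of pairs `(i,j)` of exponents of `x^i y^j`. -/
def Supp (P : MvPolynomial (Fin 2) K) : Set (ℕ × ℕ) :=
  {p | MvPolynomial.coeff (Finsupp.single 0 p.1 + Finsupp.single 1 p.2) P ≠ 0}

/-- The Jacobian bracket `[P,Q] = ∂ₓP ∂_yQ − ∂ₓQ ∂_yP`. -/
def Jb (P Q : MvPolynomial (Fin 2) K) : MvPolynomial (Fin 2) K :=
  pderiv 0 P * pderiv 1 Q - pderiv 0 Q * pderiv 1 P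

/-- The `(ρ,σ)`-degree `v_{ρ,σ}(P)` (the maximum of `ρi+σj` on the support). -/
def wdeg (ρ σ : ℤ) (P : MvPolynomial (Fin 2) K) : ℤ :=
  sSup {d : ℤ | ∃ p ∈ Supp P, d = ρ * (p.1 : ℤ) + σ * (p.2 : ℤ)}

/-- The support of the `(ρ,σ)`-leading form of `P`. -/
def LeadSupp (ρ σ : ℤ) (P : MvPolynomial (Fin 2) K) : Set (ℕ × ℕ) :=
  {p | p ∈ Supp P ∧ ρ * (p.1 : ℤ) + σ * (p.2 : ℤ) = wdeg ρ σ P}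

/-- `P` is `(ρ,σ)`-homogeneous. -/
def IsHomog (ρ σ : ℤ) (P : MvPolynomial (Fin 2) K) : Prop :=
  ∀ p ∈ Supp P, ∀ q ∈ Supp P,
    ρ * (p.1 : ℤ) + σ * (p.2 : ℤ) = ρ * (q.1 : ℤ) + σ * (q.2 : ℤ)

/-- `P` is a monomial: its support has at most one point. -/
def IsMonomial (P : MvPolynomial (Fin 2) K) : Prop := (Supp P).Subsingleton

/-- `e` is the point `en_{ρ,σ}(P)`: the point of the support of the leading form
with largest second coordinate. -/
def IsEn (ρ σ : ℤ) (P : MvPolynomial (Fin 2) K) (e : ℕ × ℕ) : Prop :=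
  e ∈ LeadSupp ρ σ P ∧ ∀ q ∈ LeadSupp ρ σ P, q.2 ≤ e.2

/-- `e` is the point `st_{ρ,σ}(P)`: the point of the support of the leading form
with smallest second coordinate. -/
def IsSt (ρ σ : ℤ) (P : MvPolynomial (Fin 2) K) (e : ℕ × ℕ) : Prop :=
  e ∈ LeadSupp ρ σ P ∧ ∀ q ∈ LeadSupp ρ σ P, e.2 ≤ q.2

namespace Polynomial

theorem s12_mult {K : Type*} [Field K] [CharZero K] (p q : K[X]) (hp0 : p.coeff 0 ≠ 0)
    (hq : q ≠ 0) (n j : ℕ) (c v u d : ℤ) (hd : 0 < d) (hu : d * p.natDegree < u)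
    (hv : v = n * u - d)
    (hE : C (c : K) * p * q + X * (C (v : K) * q * derivative p - C (u : K) * p * derivative q)
      = X ^ j * p ^ (n + 1)) (w : K[X]) (hw : Irreducible w) (m k : ℕ) (p1 q1 : K[X])
    (hm : 0 < m)
    (hp : p = w ^ m * p1) (hp1 : ¬ w ∣ p1) (hqq : q = w ^ k * q1) (hq1 : ¬ w ∣ q1) :
    n * m + 1 ≤ k := by
  by_contra hcon
  obtain ⟨e, he⟩ : ∃ e, n * m = k + e := ⟨n * m - k, by omega⟩
  have hpne : p ≠ 0 := by rintro rfl; simp at hp0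
  have hw0 : w ≠ 0 := hw.ne_zero
  have hder : ∀ (a : ℕ) (r : K[X]), w * derivative (w ^ a * r)
      = w ^ a * (C (a : K) * derivative w * r + w * derivative r) := by
    intro a r
    rcases a with _ | a
    · simp
    · simp only [derivative_mul, derivative_pow_succ]
      push_cast
      simp only [map_add, map_natCast, map_one]
      ring
  have h1 := hder m p1
  have h2 := hder k q1
  rw [← hp] at h1
  rw [← hqq] at h2
  have key : w ^ (m + k) * (C (c : K) * w * p1 * q1 + X * (C (v : K) * q1 *
      (C (m : K) * derivative w * p1 + w * derivative p1) - C (u : K) * p1 *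
      (C (k : K) * derivative w * q1 + w * derivative q1)))
      = w ^ (m + k) * (w * (w ^ e * X ^ j * p1 ^ (n + 1))) := by
    have h3 : w * (X ^ j * p ^ (n + 1)) = w ^ (m + k) * (w * (w ^ e * X ^ j * p1 ^ (n + 1))) := by
      rw [hp, mul_pow, ← pow_mul, show m * (n + 1) = m + k + e by rw [mul_add, mul_comm m n, he]; ring]
      ring
    rw [← h3, ← hE]
    have h4 : w * (C (c : K) * p * q + X * (C (v : K) * q * derivative p - C (u : K) * p * derivative q))
      = C (c : K) * w * p * q + X * (C (v : K) * q * (w * derivative p) - C (u : K) * p * (w * derivative q)) := by ring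
    rw [h4, h1, h2]
    conv_rhs => rw [hp, hqq]
    ring
  have key2 := mul_left_cancel₀ (pow_ne_zero _ hw0) key
  have hdvd : w ∣ C (((v * m - u * k : ℤ)) : K) * (X * derivative w * p1 * q1) := by
    refine ⟨w ^ e * X ^ j * p1 ^ (n + 1) - C (c : K) * p1 * q1 - X * (C (v : K) * q1 * derivative p1
      - C (u : K) * p1 * derivative q1), ?_⟩
    push_cast
    simp only [map_sub, map_mul]
    linear_combination key2
  have hwp : Prime w := hw.prime
  have hwdvdp : w ∣ p := hp ▸ (dvd_pow_self w hm.ne').mul_right _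
  have hX : ¬ w ∣ X := by
    intro h
    have h5 : Associated w X := hw.associated_of_dvd irreducible_X h
    exact hp0 (X_dvd_iff.1 (h5.symm.dvd.trans hwdvdp))
  have hdw : ¬ w ∣ derivative w := by
    intro h
    have hsep := hw.separable
    exact hw.not_isUnit (hsep.isUnit_of_dvd' dvd_rfl h)
  have hC : ¬ w ∣ (X * derivative w * p1 * q1) := by
    intro h
    rcases hwp.dvd_or_dvd h with h | h
    · rcases hwp.dvd_or_dvd h with h | h
      · rcases hwp.dvd_or_dvd h with h | h
        · exact hX h
        · exact hdw h
      · exact hp1 h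
    · exact hq1 h
  have hz : (v * m - u * k : ℤ) = 0 := by
    by_contra hne
    have h6 := (hwp.dvd_or_dvd hdvd).resolve_right hC
    have h7 : IsUnit (C (((v * m - u * k : ℤ)) : K)) :=
      isUnit_C.2 (isUnit_iff_ne_zero.2 (by exact_mod_cast hne))
    exact hw.not_isUnit (isUnit_of_dvd_unit h6 h7)
  have hmdeg : m ≤ p.natDegree := by
    have h8 : (w ^ m).natDegree ≤ p.natDegree := natDegree_le_of_dvd ⟨p1, hp⟩ hpne
    rw [natDegree_pow] at h8
    have := hw.natDegree_pos
    nlinarith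
  have he' : (n : ℤ) * m = k + e := by exact_mod_cast he
  have h9 : u * e = d * m := by
    subst hv; linear_combination hz - u * he'
  have hm' : (m : ℤ) ≤ p.natDegree := by exact_mod_cast hmdeg
  have hm0 : (0 : ℤ) < m := by exact_mod_cast hm
  have h10 : 0 < u := by nlinarith
  have he0 : (1 : ℤ) ≤ e := by
    by_contra h
    have : (e : ℤ) = 0 := by omega
    rw [this] at h9
    nlinarith
  nlinarith

theorem s12_deg {K : Type*} [Field K] [CharZero K] (p q : K[X]) (hp0 : p.coeff 0 ≠ 0)
    (hq : q ≠ 0) (n j : ℕ) (c v u d : ℤ) (hd : 0 < d) (hu : d * p.natDegree < u)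
    (hv : v = n * u - d) (hpd : 0 < p.natDegree)
    (hE : C (c : K) * p * q + X * (C (v : K) * q * derivative p - C (u : K) * p * derivative q)
      = X ^ j * p ^ (n + 1)) : n * p.natDegree + 1 ≤ q.natDegree := by
  have hpne : p ≠ 0 := by rintro rfl; simp at hp0
  have hmul : ∀ w : K[X], Irreducible w → ∀ m, 0 < m → ∀ p1, p = w ^ m * p1 → ¬ w ∣ p1 →
      w ^ (n * m + 1) ∣ q := by
    intro w hw m hm p1 hp hp1
    obtain ⟨q1, hqq, hq1⟩ := (FiniteMultiplicity.of_not_isUnit hw.not_isUnit hq).exists_eq_pow_mul_and_not_dvd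
    have := s12_mult p q hp0 hq n j c v u d hd hu hv hE w hw m _ p1 q1 hm hp hp1 hqq hq1
    exact (pow_dvd_pow w this).trans ⟨q1, hqq⟩
  obtain ⟨w, hw, hwp⟩ := exists_irreducible_of_natDegree_pos hpd
  have hdvd : p ^ n * w ∣ q := by
    have h1 : p ^ n ∣ q := by
      rw [UniqueFactorizationMonoid.dvd_iff_emultiplicity_le (pow_ne_zero _ hpne)]
      intro a ha
      obtain ⟨p1, hpp, hp1⟩ :=
        (FiniteMultiplicity.of_not_isUnit ha.not_isUnit hpne).exists_eq_pow_mul_and_not_dvd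
      rw [emultiplicity_pow ha,
        (FiniteMultiplicity.of_not_isUnit ha.not_isUnit hpne).emultiplicity_eq_multiplicity]
      rcases Nat.eq_zero_or_pos (multiplicity a p) with h0 | h0
      · rw [h0]; simp
      · have := hmul a ha.irreducible _ h0 p1 hpp hp1
        have h2 := pow_dvd_iff_le_emultiplicity.1 ((pow_dvd_pow a (Nat.le_succ _)).trans this)
        exact_mod_cast h2
    obtain ⟨r, hr⟩ := h1
    obtain ⟨p1, hpp, hp1⟩ :=
      (FiniteMultiplicity.of_not_isUnit hw.not_isUnit hpne).exists_eq_pow_mul_and_not_dvd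
    set m := multiplicity w p with hm
    have hm0 : 0 < m := by
      rcases Nat.eq_zero_or_pos m with h0 | h0
      · rw [h0, pow_zero, one_mul] at hpp
        exact absurd (hpp ▸ hwp) hp1
      · exact h0
    have h3 := hmul w hw m hm0 p1 hpp hp1
    have h4 : w ^ (n * m) * w ∣ w ^ (n * m) * (p1 ^ n * r) := by
      rw [← pow_succ]
      refine h3.trans (dvd_of_eq ?_)
      rw [hr]
      conv_lhs => rw [hpp]
      rw [mul_pow, ← pow_mul, mul_comm m n]
      ring
    have h5 := (mul_dvd_mul_iff_left (pow_ne_zero _ hw.ne_zero)).1 h4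
    have h6 : w ∣ r := (hw.prime.dvd_or_dvd h5).resolve_left
      (fun h => hp1 (hw.prime.dvd_of_dvd_pow h))
    rw [hr]
    exact mul_dvd_mul_left _ h6
  have h := natDegree_le_of_dvd hdvd hq
  rw [natDegree_mul (pow_ne_zero _ hpne) hw.ne_zero, natDegree_pow] at h
  have := hw.natDegree_pos
  omega

theorem s12_core {K : Type*} [Field K] [CharZero K] (p q : K[X]) (hp0 : p.coeff 0 ≠ 0)
    (hq0 : q.coeff 0 ≠ 0) (hpd : 0 < p.natDegree) (n j : ℕ) (α β δ γ s r c v u : ℤ)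
    (h1 : δ + j * s = n * α + 1) (h2 : γ + j * r = n * β + 1) (hsr : r < s) (hβα : β < α)
    (hc : c = δ * β - α * γ) (hv : v = δ * r - γ * s) (hu : u = α * r - β * s)
    (hud : (s - r) * p.natDegree < u)
    (hE : C (c : K) * p * q + X * (C (v : K) * q * derivative p - C (u : K) * p * derivative q)
      = X ^ j * p ^ (n + 1)) : 1 ≤ j ∧ j * u = α - β := by
  have hq : q ≠ 0 := by rintro rfl; simp at hq0
  have hpne : p ≠ 0 := by rintro rfl; simp at hp0
  have hd : 0 < s - r := by omega
  have hv' : v = n * u - (s - r) := by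
    rw [hv, hu]; linear_combination r * h1 - s * h2
  have hdeg := s12_deg p q hp0 hq n j c v u (s - r) hd hud hv' hpd hE
  have hc' : c = j * u - (α - β) := by
    rw [hc, hu]; linear_combination β * h1 - α * h2
  have hj : j ≠ 0 → c = 0 := by
    intro hj
    have h := congrArg (fun f => coeff f 0) hE
    simpa [mul_coeff_zero, hj, hp0, hq0, Ne.symm hj] using h
  obtain ⟨l, hl⟩ : ∃ l, q.natDegree = n * p.natDegree + 1 + l := ⟨_, (Nat.add_sub_of_le hdeg).symm⟩
  -- top coefficient
  have htop : (C (c : K) * p * q + X * (C (v : K) * q * derivative p - C (u : K) * p * derivative q)).coeff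
      (p.natDegree + q.natDegree) = (c + v * p.natDegree - u * q.natDegree) * (p.leadingCoeff * q.leadingCoeff) := by
    obtain ⟨b, hb⟩ : ∃ b, q.natDegree = b + 1 := ⟨q.natDegree - 1, by omega⟩
    obtain ⟨a, ha⟩ : ∃ a, p.natDegree = a + 1 := ⟨p.natDegree - 1, by omega⟩
    have e1 : (p * q).coeff (p.natDegree + q.natDegree) = p.leadingCoeff * q.leadingCoeff :=
      coeff_mul_degree_add_degree p q
    have e2 : (X * (q * derivative p)).coeff (p.natDegree + q.natDegree) = p.natDegree * (p.leadingCoeff * q.leadingCoeff) := by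
      rw [show p.natDegree + q.natDegree = (q.natDegree + a) + 1 by omega, coeff_X_mul,
        coeff_mul_add_eq_of_natDegree_le le_rfl (by have := natDegree_derivative_le p; omega), coeff_derivative, ← ha, coeff_natDegree,
        coeff_natDegree, ha]
      push_cast; ring
    have e3 : (X * (p * derivative q)).coeff (p.natDegree + q.natDegree) = q.natDegree * (p.leadingCoeff * q.leadingCoeff) := by
      rw [show p.natDegree + q.natDegree = (p.natDegree + b) + 1 by omega, coeff_X_mul,
        coeff_mul_add_eq_of_natDegree_le le_rfl (by have := natDegree_derivative_le q; omega), coeff_derivative, ← hb, coeff_natDegree,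
        coeff_natDegree, hb]
      push_cast; ring
    rw [show C (c : K) * p * q + X * (C (v : K) * q * derivative p - C (u : K) * p * derivative q)
      = C (c : K) * (p * q) + C (v : K) * (X * (q * derivative p)) - C (u : K) * (X * (p * derivative q)) by ring,
      coeff_sub, coeff_add, coeff_C_mul, coeff_C_mul, coeff_C_mul, e1, e2, e3]
    ring
  have hupos : 0 < u := by nlinarith [hud, hd, (Int.natCast_nonneg p.natDegree)]
  have hl' : (q.natDegree : ℤ) = n * p.natDegree + 1 + l := by exact_mod_cast hl
  by_cases hcase : c + v * p.natDegree - u * q.natDegree = 0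
  · exfalso
    have h3 : c = u * (1 + l) + (s - r) * p.natDegree := by
      rw [hv', hl'] at hcase; linear_combination hcase
    have hp' : (0 : ℤ) < p.natDegree := by exact_mod_cast hpd
    have hcpos : 0 < c := by rw [h3]; positivity
    have : j = 0 := by by_contra h; have := hj h; omega
    rw [this] at hc'
    simp at hc'; omega
  · have hne : (X ^ j * p ^ (n + 1)).coeff (p.natDegree + q.natDegree) ≠ 0 := by
      rw [← hE, htop]
      refine mul_ne_zero ?_ (mul_ne_zero (leadingCoeff_ne_zero.2 hpne) (leadingCoeff_ne_zero.2 hq))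
      exact_mod_cast hcase
    have h4 := le_natDegree_of_ne_zero hne
    rw [natDegree_mul (by simp) (pow_ne_zero _ hpne), natDegree_X_pow, natDegree_pow] at h4
    have hj1 : 1 ≤ j := by
      rw [hl] at h4; nlinarith
    refine ⟨hj1, ?_⟩
    have := hj (by omega)
    omega

end Polynomial

theorem s12_num1 (r a d k N u : ℤ) (ha : 0 ≤ a) (hd : 1 ≤ d) (hk : 1 ≤ k) (hN : N ≤ k)
    (hu : r ≤ u) (h : d * N < u → ∃ j : ℤ, 1 ≤ j ∧ j * u = a + 1) :
    r ≤ 2 * a * d + k * d ^ 2 := by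
  have h1 : 0 ≤ a * (d - 1) := mul_nonneg ha (by omega)
  have h2 : k * d * 1 ≤ k * d * d := mul_le_mul_of_nonneg_left hd (by positivity)
  have h3 : 1 * 1 ≤ k * d := mul_le_mul hk hd (by norm_num) (by omega)
  by_cases hud : d * N < u
  · obtain ⟨j, hj, hju⟩ := h hud
    have h4 : u ≤ a + 1 := by
      by_contra hcon
      have : 0 ≤ (j - 1) * u := mul_nonneg (by omega) (by omega)
      linarith
    linarith
  · have h4 : d * N ≤ d * k := mul_le_mul_of_nonneg_left hN (by omega)
    linarith

theorem s12_num2 (α β k r s : ℤ) (h1 : β < α) (hk : 1 ≤ k) (hrs : r < s)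
    (hb : β ≤ (α - β - 1) ^ 2)
    (h : r ≤ 2 * (α - β - 1) * (s - r) + k * (s - r) ^ 2) :
    β + k * r < α + k * s ∧ β + k * r ≤ (α + k * s - (β + k * r) - 1) ^ 2 := by
  constructor
  · have : 0 < k * (s - r) := mul_pos (by omega) (by omega)
    linarith
  · have := mul_le_mul_of_nonneg_left h (show (0 : ℤ) ≤ k by omega)
    linarith

/-- The quasi-homogeneous form `x^a y^b p(x^s y^r)`. -/
def s12Form {K : Type*} [Field K] (s r a b : ℕ) (p : Polynomial K) : MvPolynomial (Fin 2) K :=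
  X 0 ^ a * X 1 ^ b * Polynomial.aeval (X 0 ^ s * X 1 ^ r : MvPolynomial (Fin 2) K) p

theorem s12_coeff {K : Type*} [Field K] (s r a b a' b' : ℕ) (p : Polynomial K)
    (h : coeff (Finsupp.single 0 a' + Finsupp.single 1 b') (s12Form s r a b p) ≠ 0) :
    a ≤ a' ∧ b ≤ b' := by
  have e : s12Form s r a b p = monomial (Finsupp.single 0 a + Finsupp.single 1 b) 1 *
      Polynomial.aeval (X 0 ^ s * X 1 ^ r : MvPolynomial (Fin 2) K) p := by
    rw [s12Form, X_pow_eq_monomial, X_pow_eq_monomial, monomial_mul, one_mul]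
  rw [e, coeff_monomial_mul'] at h
  have h1 := (ite_ne_right_iff.1 h).1
  have h2 := h1 0
  have h3 := h1 1
  simp at h2 h3
  exact ⟨h2, h3⟩

theorem s12_coeff_self {K : Type*} [Field K] (s r a b : ℕ) (hr : 0 < r) (p : Polynomial K) :
    coeff (Finsupp.single 0 a + Finsupp.single 1 b) (s12Form s r a b p) = p.coeff 0 := by
  have e : s12Form s r a b p = monomial (Finsupp.single 0 a + Finsupp.single 1 b) 1 *
      Polynomial.aeval (X 0 ^ s * X 1 ^ r : MvPolynomial (Fin 2) K) p := by
    rw [s12Form, X_pow_eq_monomial, X_pow_eq_monomial, monomial_mul, one_mul]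
  rw [e, coeff_monomial_mul', if_pos le_rfl, tsub_self, one_mul, ← constantCoeff_eq,
    Polynomial.aeval_def, Polynomial.hom_eval₂]
  simp [hr.ne', Polynomial.coeff_zero_eq_eval_zero]

theorem s12_inj {K : Type*} [Field K] (s r : ℕ) (hr : 0 < r) (a b : ℕ) (p q : Polynomial K)
    (h : s12Form s r a b p = s12Form s r a b q) : p = q := by
  have h1 : (X 0 ^ a * X 1 ^ b : MvPolynomial (Fin 2) K) ≠ 0 :=
    mul_ne_zero (pow_ne_zero _ (X_ne_zero _)) (pow_ne_zero _ (X_ne_zero _))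
  have h2 := mul_left_cancel₀ h1 h
  have h3 := congrArg (MvPolynomial.aeval (![1, Polynomial.X] : Fin 2 → Polynomial K)) h2
  rw [← Polynomial.aeval_algHom_apply, ← Polynomial.aeval_algHom_apply] at h3
  simp at h3
  apply Polynomial.expand_injective hr
  rw [Polynomial.expand_eq_sum, Polynomial.expand_eq_sum]
  simpa only [Polynomial.aeval_def, Polynomial.eval₂_eq_sum, Polynomial.algebraMap_eq] using h3

theorem s12_shift {K : Type*} [Field K] (s r a b e : ℕ) (p : Polynomial K) :
    s12Form s r a b (Polynomial.X ^ e * p) = s12Form s r (a + e * s) (b + e * r) p := by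
  simp only [s12Form, map_mul, map_pow, Polynomial.aeval_X]
  ring

theorem s12_compare {K : Type*} [Field K] (s r : ℕ) (hr : 0 < r) (a b a' b' : ℕ)
    (p q : Polynomial K) (hp : p ≠ 0) (hq : q.coeff 0 ≠ 0)
    (h : s12Form s r a b p = s12Form s r a' b' q) :
    ∃ e, a + e * s = a' ∧ b + e * r = b' ∧ p = Polynomial.X ^ e * q := by
  obtain ⟨p1, hp1, hnd⟩ := (FiniteMultiplicity.of_not_isUnit Polynomial.irreducible_X.not_isUnit
    hp).exists_eq_pow_mul_and_not_dvd
  generalize multiplicity Polynomial.X p = e at hp1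
  rw [Polynomial.X_dvd_iff] at hnd
  rw [hp1, s12_shift] at h
  have h1 := s12_coeff s r (a + e * s) (b + e * r) a' b' p1
    (by rw [h, s12_coeff_self _ _ _ _ hr]; exact hq)
  have h2 := s12_coeff s r a' b' (a + e * s) (b + e * r) q
    (by rw [← h, s12_coeff_self _ _ _ _ hr]; exact hnd)
  have ha : a + e * s = a' := by omega
  have hb : b + e * r = b' := by omega
  refine ⟨e, ha, hb, ?_⟩
  rw [ha, hb] at h
  rw [hp1, s12_inj s r hr _ _ _ _ h]

theorem s12_euler0 {K : Type*} [Field K] (s r a b : ℕ) (p : Polynomial K) :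
    X 0 * pderiv 0 (s12Form s r a b p)
      = s12Form s r a b (Polynomial.C (a : K) * p + Polynomial.C (s : K) * Polynomial.X * Polynomial.derivative p) := by
  have hx : ∀ n : ℕ, (X 0 : MvPolynomial (Fin 2) K) * pderiv 0 (X 0 ^ n : MvPolynomial (Fin 2) K)
      = (n : MvPolynomial (Fin 2) K) * X 0 ^ n := by
    intro n
    rcases n with _ | n
    · simp
    · simp [pderiv_pow]; ring
  have hy : ∀ n : ℕ, pderiv 0 (X 1 ^ n : MvPolynomial (Fin 2) K) = 0 := by
    intro n; simp [pderiv_pow]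
  simp only [s12Form, Derivation.leibniz, Derivation.map_aeval, hy, smul_eq_mul, map_add, map_mul,
    Polynomial.aeval_X, Polynomial.aeval_C, map_natCast]
  linear_combination (X 1 ^ b * Polynomial.aeval (X 0 ^ s * X 1 ^ r : MvPolynomial (Fin 2) K) p) * hx a
    + X 0 ^ a * X 1 ^ b * Polynomial.aeval (X 0 ^ s * X 1 ^ r : MvPolynomial (Fin 2) K) (Polynomial.derivative p) * X 1 ^ r * hx s

theorem s12_euler1 {K : Type*} [Field K] (s r a b : ℕ) (p : Polynomial K) :
    X 1 * pderiv 1 (s12Form s r a b p)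
      = s12Form s r a b (Polynomial.C (b : K) * p + Polynomial.C (r : K) * Polynomial.X * Polynomial.derivative p) := by
  have hx : ∀ n : ℕ, (X 1 : MvPolynomial (Fin 2) K) * pderiv 1 (X 1 ^ n : MvPolynomial (Fin 2) K)
      = (n : MvPolynomial (Fin 2) K) * X 1 ^ n := by
    intro n
    rcases n with _ | n
    · simp
    · simp [pderiv_pow]; ring
  have hy : ∀ n : ℕ, pderiv 1 (X 0 ^ n : MvPolynomial (Fin 2) K) = 0 := by
    intro n; simp [pderiv_pow]
  simp only [s12Form, Derivation.leibniz, Derivation.map_aeval, hy, smul_eq_mul, map_add, map_mul,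
    Polynomial.aeval_X, Polynomial.aeval_C, map_natCast]
  linear_combination (X 0 ^ a * Polynomial.aeval (X 0 ^ s * X 1 ^ r : MvPolynomial (Fin 2) K) p) * hx b
    + X 0 ^ a * X 1 ^ b * Polynomial.aeval (X 0 ^ s * X 1 ^ r : MvPolynomial (Fin 2) K) (Polynomial.derivative p) * X 0 ^ s * hx r

theorem s12_mulForm {K : Type*} [Field K] (s r a b a' b' : ℕ) (p q : Polynomial K) :
    s12Form s r a b p * s12Form s r a' b' q = s12Form s r (a + a') (b + b') (p * q) := by
  simp only [s12Form, map_mul]; ring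

theorem s12_powForm {K : Type*} [Field K] (s r a b i : ℕ) (p : Polynomial K) :
    X 0 * X 1 * s12Form s r a b p ^ i = s12Form s r (i * a + 1) (i * b + 1) (p ^ i) := by
  simp only [s12Form, map_pow]; ring

theorem s12_Jb {K : Type*} [Field K] [CharZero K] (s r a b a' b' : ℕ) (p q : Polynomial K) :
    X 0 * X 1 * Jb (s12Form s r a' b' q) (s12Form s r a b p)
      = s12Form s r (a + a') (b + b') (Polynomial.C (((a' : ℤ) * b - a * b' : ℤ) : K) * p * q
        + Polynomial.X * (Polynomial.C (((a' : ℤ) * r - b' * s : ℤ) : K) * q * Polynomial.derivative p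
          - Polynomial.C (((a : ℤ) * r - b * s : ℤ) : K) * p * Polynomial.derivative q)) := by
  have h : X 0 * X 1 * Jb (s12Form s r a' b' q) (s12Form s r a b p)
     = (X 0 * pderiv 0 (s12Form s r a' b' q)) * (X 1 * pderiv 1 (s12Form s r a b p))
       - (X 0 * pderiv 0 (s12Form s r a b p)) * (X 1 * pderiv 1 (s12Form s r a' b' q)) := by
    rw [Jb]; ring
  rw [h, s12_euler0, s12_euler0, s12_euler1, s12_euler1, s12_mulForm, s12_mulForm, add_comm a' a,
    add_comm b' b]
  simp only [s12Form, ← mul_sub, ← map_sub]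
  congr 2
  push_cast
  simp only [map_sub, map_mul]
  ring

theorem s12_exists {K : Type*} [Field K] [CharZero K] (ϱ ς : ℤ) (s r : ℕ) (hϱ : ϱ = r)
    (hς : ς = -s) (hr : 0 < r) (hgcd : Int.gcd ϱ ς = 1) (P : MvPolynomial (Fin 2) K)
    (hP : IsHomog ϱ ς P) (a b : ℕ) (hab : (a, b) ∈ Supp P) (hmin : ∀ q ∈ Supp P, b ≤ q.2)
    (k : ℕ) (hk : ∀ q ∈ Supp P, q.2 ≤ b + k * r) :
    ∃ p : Polynomial K, P = s12Form s r a b p ∧ p.coeff 0 ≠ 0 ∧ p.natDegree ≤ k := by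
  have hpts : ∀ q ∈ Supp P, ∃ n, n ≤ k ∧ q.1 = a + n * s ∧ q.2 = b + n * r := by
    intro q hq
    have h1 := hP q hq _ hab
    have h2 := hmin q hq
    have h3 := hk q hq
    obtain ⟨t, ht⟩ := Nat.exists_eq_add_of_le h2
    subst hϱ hς
    have ht' : (q.2 : ℤ) = b + t := by exact_mod_cast ht
    have h4 : (r : ℤ) * ((q.1 : ℤ) - a) = s * t := by
      rw [ht'] at h1; simp only at h1; linear_combination h1
    have hcop : IsCoprime (r : ℤ) (s : ℤ) := by
      rw [Int.isCoprime_iff_gcd_eq_one]; simpa using hgcd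
    have h5 : (r : ℤ) ∣ t := hcop.dvd_of_dvd_mul_left ⟨_, h4.symm⟩
    obtain ⟨n, hn⟩ := Int.natCast_dvd_natCast.1 h5
    refine ⟨n, ?_, ?_, ?_⟩
    · rw [ht, hn] at h3
      have : r * n ≤ r * k := by linarith [mul_comm r k]
      exact Nat.le_of_mul_le_mul_left this hr
    · have hn' : (t : ℤ) = r * n := by exact_mod_cast hn
      have hr' : (r : ℤ) ≠ 0 := by exact_mod_cast hr.ne'
      have h6 : (q.1 : ℤ) - a = s * n := by
        apply mul_left_cancel₀ hr'
        rw [h4, hn']; ring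
      have : (q.1 : ℤ) = a + n * s := by linear_combination h6
      exact_mod_cast this
    · rw [ht, hn, mul_comm]
  have hsup : ∀ m ∈ P.support, (m 0, m 1) ∈ Supp P := by
    intro m hm
    have : Finsupp.single 0 (m 0) + Finsupp.single 1 (m 1) = m := by
      ext x; fin_cases x <;> simp
    simp only [Supp, Set.mem_ofPred_eq, this]
    exact mem_support_iff.1 hm
  have hform : P = s12Form s r a b (∑ m ∈ P.support, Polynomial.monomial ((m 1 - b) / r) (coeff m P)) := by
    rw [s12Form, map_sum, Finset.mul_sum]
    conv_lhs => rw [P.as_sum]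
    refine Finset.sum_congr rfl fun m hm => ?_
    obtain ⟨n, -, h1, h2⟩ := hpts _ (hsup m hm)
    simp only at h1 h2
    have hdiv : (m 1 - b) / r = n := by
      rw [h2, Nat.add_sub_cancel_left, Nat.mul_div_cancel _ hr]
    rw [hdiv, Polynomial.aeval_monomial, monomial_eq, Finsupp.prod_fintype _ _ (by simp)]
    simp only [Fin.prod_univ_two, h1, h2, algebraMap_eq]
    ring
  refine ⟨_, hform, ?_, ?_⟩
  · rw [← s12_coeff_self s r a b hr, ← hform]
    exact hab
  · refine Polynomial.natDegree_sum_le_of_forall_le _ _ fun m hm => ?_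
    obtain ⟨n, hn, h1, h2⟩ := hpts _ (hsup m hm)
    simp only at h1 h2
    have hdiv : (m 1 - b) / r = n := by
      rw [h2, Nat.add_sub_cancel_left, Nat.mul_div_cancel _ hr]
    rw [hdiv]
    exact (Polynomial.natDegree_monomial_le _).trans hn

/-- Lemma "para la cota": under the hypotheses, if `β<α` and `β ≤ (α−β−1)²`
for `(α,β) = st_{ϱ,ς}(R)`, then `β'<α'` and `β' ≤ (α'−β'−1)²`
for `(α',β') = en_{ϱ,ς}(R)`. -/
theorem stmt12 (K : Type*) [Field K] [CharZero K]
    (ϱ ς : ℤ) (hgcd : Int.gcd ϱ ς = 1) (hϱ : 0 < ϱ) (hϱς : ϱ + ς < 0)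
    (R G : MvPolynomial (Fin 2) K)
    (hhomR : IsHomog ϱ ς R) (hhomG : IsHomog ϱ ς G)
    (hmono : ¬ IsMonomial R)
    (i : ℕ) (hi : 1 ≤ i) (hbr : Jb G R = R ^ i)
    (hu : ϱ ≤ wdeg ϱ ς R)
    (α' β' : ℕ) (hen : IsEn ϱ ς R (α', β')) (hv12 : (α' : ℤ) - 2 * (β' : ℤ) ≤ 0)
    (α β : ℕ) (hst : IsSt ϱ ς R (α, β))
    (hβα : β < α) (hbound : (β : ℤ) ≤ ((α : ℤ) - (β : ℤ) - 1) ^ 2) :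
    β' < α' ∧ (β' : ℤ) ≤ ((α' : ℤ) - (β' : ℤ) - 1) ^ 2 := by
  have hi' : ∃ n, i = n + 1 := ⟨i - 1, by omega⟩
  obtain ⟨n, rfl⟩ := hi'
  obtain ⟨r, hr⟩ : ∃ r : ℕ, ϱ = r := ⟨ϱ.toNat, by omega⟩
  obtain ⟨s, hs⟩ : ∃ s : ℕ, ς = -s := ⟨(-ς).toNat, by omega⟩
  have hr0 : 0 < r := by omega
  have hrs : r < s := by omega
  obtain ⟨⟨hstS, hstw⟩, hstm⟩ := hst
  obtain ⟨⟨henS, henw⟩, henm⟩ := hen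
  have hlead : ∀ q ∈ Supp R, q ∈ LeadSupp ϱ ς R := fun q hq =>
    ⟨hq, (hhomR q hq _ hstS).trans hstw⟩
  have hu' : (r : ℤ) ≤ α * r - β * s := by
    rw [← hstw, hr, hs] at hu
    simp only at hu
    linarith
  -- the end point
  have hβ' : β ≤ β' := hstm _ (hlead _ henS)
  obtain ⟨k, hα'k, hβ'k⟩ : ∃ k : ℕ, α' = α + k * s ∧ β' = β + k * r := by
    obtain ⟨t, ht⟩ := Nat.exists_eq_add_of_le hβ'
    have h1 := henw.trans hstw.symm
    have ht' : (β' : ℤ) = β + t := by exact_mod_cast ht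
    have h4 : (r : ℤ) * ((α' : ℤ) - α) = s * t := by
      simp only [hr, hs] at h1
      rw [ht'] at h1; linear_combination h1
    have hcop : IsCoprime (r : ℤ) (s : ℤ) := by
      rw [Int.isCoprime_iff_gcd_eq_one]; rw [hr, hs] at hgcd; simpa using hgcd
    have h5 : (r : ℤ) ∣ t := hcop.dvd_of_dvd_mul_left ⟨_, h4.symm⟩
    obtain ⟨m, hm⟩ := Int.natCast_dvd_natCast.1 h5
    have hm' : (t : ℤ) = r * m := by exact_mod_cast hm
    have hr' : (r : ℤ) ≠ 0 := by exact_mod_cast hr0.ne'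
    have h6 : (α' : ℤ) - α = s * m := by
      apply mul_left_cancel₀ hr'
      rw [h4, hm']; ring
    refine ⟨m, ?_, ?_⟩
    · have : (α' : ℤ) = α + m * s := by linear_combination h6
      exact_mod_cast this
    · rw [ht, hm, mul_comm]
  obtain ⟨p, hRp, hp0, hpk⟩ := s12_exists ϱ ς s r hr hs hr0 hgcd R hhomR α β hstS
    (fun q hq => hstm q (hlead q hq)) k (fun q hq => hβ'k ▸ henm q (hlead q hq))
  have hpd : 0 < p.natDegree := by
    by_contra h
    rw [Polynomial.eq_C_of_natDegree_eq_zero (Nat.eq_zero_of_not_pos h)] at hRp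
    apply hmono
    have hR2 : R = monomial (Finsupp.single 0 α + Finsupp.single 1 β) (p.coeff 0) := by
      rw [hRp, s12Form, Polynomial.aeval_C, X_pow_eq_monomial, X_pow_eq_monomial, monomial_mul,
        algebraMap_eq, mul_comm, C_mul_monomial]
      simp
    have hone : ∀ q ∈ Supp R, q = (α, β) := by
      intro q hq
      simp only [Supp, hR2, coeff_monomial, Set.mem_ofPred_eq] at hq
      have h1 := (ite_ne_right_iff.1 hq).1
      have h2 := DFunLike.congr_fun h1 0
      have h3 := DFunLike.congr_fun h1 1
      simp at h2 h3
      exact Prod.ext h2.symm h3.symm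
    intro q hq q' hq'
    rw [hone q hq, hone q' hq']
  have hpne : p ≠ 0 := by rintro rfl; simp at hp0
  have hk0 : 1 ≤ k := by omega
  have hR0 : R ≠ 0 := by
    rintro rfl; exact hstS (by simp)
  have hG0 : G ≠ 0 := by
    rintro rfl
    have : R ^ (n + 1) = 0 := by rw [← hbr]; simp [Jb]
    exact pow_ne_zero _ hR0 this
  -- the starting point of G
  have hGne : (Supp G).Nonempty := by
    obtain ⟨m, hm⟩ := support_nonempty.2 hG0
    refine ⟨(m 0, m 1), ?_⟩
    have : Finsupp.single 0 (m 0) + Finsupp.single 1 (m 1) = m := by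
      ext x; fin_cases x <;> simp
    simp only [Supp, Set.mem_ofPred_eq, this]
    exact mem_support_iff.1 hm
  obtain ⟨⟨δ, γ⟩, hG1, hG2⟩ : ∃ g ∈ Supp G, ∀ q ∈ Supp G, g.2 ≤ q.2 := by
    have hne : ((fun q : ℕ × ℕ => q.2) '' Supp G).Nonempty := hGne.image _
    obtain ⟨g, hg, hge⟩ := Nat.sInf_mem hne
    exact ⟨g, hg, fun q hq => by
      have := Nat.sInf_le (Set.mem_image_of_mem (fun q : ℕ × ℕ => q.2) hq)
      simp only at hge this
      omega⟩
  have hGk : ∀ q ∈ Supp G, q.2 ≤ γ + (G.totalDegree) * r := by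
    intro q hq
    have h1 := le_totalDegree (mem_support_iff.2 hq)
    rw [Finsupp.sum_add_index' (by simp) (by simp)] at h1
    simp at h1
    nlinarith
  obtain ⟨g, hGg, hg0, -⟩ := s12_exists ϱ ς s r hr hs hr0 hgcd G hhomG δ γ hG1 hG2 _ hGk
  have hJ := s12_Jb s r α β δ γ p g
  rw [← hGg, ← hRp, hbr] at hJ
  have hJ2 := s12_powForm s r α β (n + 1) p
  rw [← hRp] at hJ2
  have hF := hJ.symm.trans hJ2
  have hpow0 : (p ^ (n + 1)).coeff 0 ≠ 0 := by
    rw [Polynomial.coeff_zero_eq_eval_zero, Polynomial.eval_pow, ← Polynomial.coeff_zero_eq_eval_zero]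
    exact pow_ne_zero _ hp0
  obtain ⟨j, hj1, hj2, hE⟩ := s12_compare s r hr0 _ _ _ _ _ _ (by
    intro h0
    rw [h0] at hF
    have h1 := s12_coeff_self s r ((n + 1) * α + 1) ((n + 1) * β + 1) hr0 (p ^ (n + 1))
    rw [← hF] at h1
    apply hpow0
    rw [← h1]
    simp [s12Form]) hpow0 hF
  have hj1' : (δ : ℤ) + j * s = n * α + 1 := by
    have : (α : ℤ) + δ + j * s = (n + 1) * α + 1 := by exact_mod_cast hj1
    linear_combination this
  have hj2' : (γ : ℤ) + j * r = n * β + 1 := by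
    have : (β : ℤ) + γ + j * r = (n + 1) * β + 1 := by exact_mod_cast hj2
    linear_combination this
  have hrs' : (r : ℤ) < s := by exact_mod_cast hrs
  have hβα' : (β : ℤ) < α := by exact_mod_cast hβα
  have hk' : (1 : ℤ) ≤ k := by exact_mod_cast hk0
  have hfin : (r : ℤ) ≤ 2 * (α - β - 1) * (s - r) + k * (s - r) ^ 2 := by
    have ha0 : (0 : ℤ) ≤ α - β - 1 := by omega
    have hd1 : (1 : ℤ) ≤ s - r := by omega
    have hpk' : (p.natDegree : ℤ) ≤ k := by exact_mod_cast hpk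
    refine s12_num1 _ _ _ _ _ _ ha0 hd1 hk' hpk' (show _ ≤ (α : ℤ) * r - β * s from hu') ?_
    intro hud
    obtain ⟨hj, hju⟩ := Polynomial.s12_core p g hp0 hg0 hpd n j α β δ γ s r _ _ _ hj1' hj2' hrs' hβα'
        rfl rfl rfl hud hE
    refine ⟨j, by exact_mod_cast hj, ?_⟩
    rw [hju]; ring
  have hα'z : (α' : ℤ) = α + k * s := by exact_mod_cast hα'k
  have hβ'z : (β' : ℤ) = β + k * r := by exact_mod_cast hβ'k
  have hn := s12_num2 α β k r s hβα' hk' hrs' hbound hfin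
  rw [← hα'z, ← hβ'z] at hn
  exact ⟨by exact_mod_cast hn.1, hn.2⟩

end
end

section
/- If (a′,b′) ∈ ℕ×ℕ is a possible A0′, i.e. (a′,b′) is the end point of some admissible chain, then b′ < a′ and b′ ≤ (a′ − b′ − 1)². -/
open MvPolynomial

noncomputable section

variable {K : Type*} [Field K] [CharZero K]

/-- An admissible chain of length `k`: points `C 0, …, C k`, polynomials
`Rp 1, …, Rp k` and directions `dir 1, …, dir k` satisfying conditions
(i)–(viii) of Definition "cadena admisible". -/
structure AdmChain (K : Type*) [Field K] [CharZero K] (k : ℕ) where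
  C : ℕ → ℕ × ℕ
  Rp : ℕ → MvPolynomial (Fin 2) K
  dir : ℕ → ℤ × ℤ
  hdir : ∀ j, 1 ≤ j → j ≤ k →
    Int.gcd (dir j).1 (dir j).2 = 1 ∧ 0 < (dir j).1 ∧ (dir j).1 + (dir j).2 < 0
  hC0 : ∃ l : ℕ, 1 ≤ l ∧ C 0 = (l, 0)
  hincr : ∀ j, 2 ≤ j → j ≤ k →
    0 < (dir (j - 1)).1 * (dir j).2 - (dir (j - 1)).2 * (dir j).1
  hhom : ∀ j, 1 ≤ j → j ≤ k → IsHomog (dir j).1 (dir j).2 (Rp j)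
  hmono : ∀ j, 1 ≤ j → j ≤ k → ¬ IsMonomial (Rp j)
  hst : ∀ j, 1 ≤ j → j ≤ k → IsSt (dir j).1 (dir j).2 (Rp j) (C (j - 1))
  hen : ∀ j, 1 ≤ j → j ≤ k → IsEn (dir j).1 (dir j).2 (Rp j) (C j)
  hdiag : ∀ j, 1 ≤ j → j ≤ k → (C j).2 < (C j).1
  hval : ∀ j, 1 ≤ j → j ≤ k →
    (dir j).1 ≤ (dir j).1 * ((C j).1 : ℤ) + (dir j).2 * ((C j).2 : ℤ)
  hG : ∀ j, 1 ≤ j → j ≤ k → ∃ (G : MvPolynomial (Fin 2) K) (i : ℕ), 1 ≤ i ∧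
    IsHomog (dir j).1 (dir j).2 G ∧ Jb G (Rp j) = (Rp j) ^ i

/-- A point of `ℕ × ℕ` is a possible `A₀′` if it is the end point of some
admissible chain. -/
def PossibleA0 (K : Type*) [Field K] [CharZero K] (p : ℕ × ℕ) : Prop :=
  ∃ (k : ℕ) (ch : AdmChain K k), ch.C k = p

namespace CotaAux
open Polynomial

theorem mult_lt_card_support {L : Type*} [Field L] [CharZero L] {α : L} (hα : α ≠ 0) (k : ℕ) :
    ∀ p : L[X], p ≠ 0 → (Polynomial.X - Polynomial.C α) ^ k ∣ p → k + 1 ≤ p.support.card := by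
  induction k with
  | zero =>
    intro p hp _
    have : p.support.Nonempty := by simpa [Polynomial.support_eq_empty, Finset.nonempty_iff_ne_empty] using hp
    simpa using this.card_pos
  | succ k ih =>
    intro p hp hd
    set j := p.natDegree with hj
    set q : L[X] := Polynomial.X * derivative p - Polynomial.C (j : L) * p with hq
    have hco : ∀ c, q.coeff c = ((c : L) - j) * p.coeff c := by
      intro c
      rw [hq, Polynomial.coeff_sub, Polynomial.coeff_C_mul]
      cases c with
      | zero => simp
      | succ c => rw [Polynomial.coeff_X_mul, coeff_derivative]; push_cast; ring
    have hs : q.support = p.support.erase j := by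
      ext c
      simp only [Polynomial.mem_support_iff, hco, Finset.mem_erase, ne_eq, mul_eq_zero, not_or, sub_eq_zero,
        Nat.cast_inj]
    have hjm : j ∈ p.support := by simpa [hj] using hp
    have hcard : q.support.card + 1 = p.support.card := by
      rw [hs]; exact Finset.card_erase_add_one hjm
    have hdq : (Polynomial.X - Polynomial.C α) ^ k ∣ q := by
      apply dvd_sub
      · have := pow_sub_one_dvd_derivative_of_pow_dvd hd
        exact Dvd.dvd.mul_left (by simpa using this) _
      · exact Dvd.dvd.mul_left ((pow_dvd_pow _ (Nat.le_succ k)).trans hd) _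
    by_cases hq0 : q = 0
    · exfalso
      have hroot : p.eval α = 0 := by
        have : (Polynomial.X - Polynomial.C α) ∣ p := (dvd_pow_self _ (Nat.succ_ne_zero k)).trans hd
        exact dvd_iff_isRoot.mp this
      have hc1 : p.support.card = 1 := by rw [← hcard, hq0]; simp
      obtain ⟨n, x, hx, hpx⟩ := card_support_eq_one.mp hc1
      rw [hpx] at hroot
      simp at hroot
      tauto
    · have := ih q hq0 hdq
      omega

theorem local_ode {L : Type*} [Field L] [CharZero L] (α : L) (r g : L[X]) (hr : r ≠ 0) (hg : g ≠ 0)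
    (i : ℕ) (ρ m n : L)
    (hode : Polynomial.C ρ * r ^ i = Polynomial.C n * g * derivative r - Polynomial.C m * r * derivative g) :
    i * r.rootMultiplicity α + 1 ≤ r.rootMultiplicity α + g.rootMultiplicity α ∨
      n * r.rootMultiplicity α = m * g.rootMultiplicity α := by
  obtain ⟨r1, hr1, hr2⟩ := exists_eq_pow_rootMultiplicity_mul_and_not_dvd r hr α
  obtain ⟨g1, hg1, hg2⟩ := exists_eq_pow_rootMultiplicity_mul_and_not_dvd g hg α
  generalize r.rootMultiplicity α = μ at *
  generalize g.rootMultiplicity α = ν at *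
  by_contra! hcon
  obtain ⟨h1, h2⟩ := hcon
  obtain ⟨w, hw⟩ : ∃ w, i * μ + 1 = μ + ν + 1 + w := ⟨i * μ - (μ + ν), by omega⟩
  have hder : ∀ (k : ℕ) (u : L[X]), (Polynomial.X - Polynomial.C α) * derivative ((Polynomial.X - Polynomial.C α) ^ k * u) =
      (Polynomial.X - Polynomial.C α) ^ k * (Polynomial.C (k : L) * u + (Polynomial.X - Polynomial.C α) * derivative u) := by
    intro k u
    rw [derivative_mul, derivative_X_sub_C_pow]
    cases k with
    | zero => simp
    | succ k => simp only [Nat.add_sub_cancel, map_natCast]; ring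
  have e1 := hder μ r1
  have e2 := hder ν g1
  rw [← hr1] at e1
  rw [← hg1] at e2
  have key : (Polynomial.X - Polynomial.C α) ^ (μ + ν) * ((Polynomial.X - Polynomial.C α) ^ (w + 1) * (Polynomial.C ρ * r1 ^ i)) =
     (Polynomial.X - Polynomial.C α) ^ (μ + ν) * (Polynomial.C n * g1 * (Polynomial.C (μ : L) * r1 + (Polynomial.X - Polynomial.C α) * derivative r1)
       - Polynomial.C m * r1 * (Polynomial.C (ν : L) * g1 + (Polynomial.X - Polynomial.C α) * derivative g1)) := by
    have hl : (Polynomial.X - Polynomial.C α) ^ (μ + ν) * ((Polynomial.X - Polynomial.C α) ^ (w + 1) * (Polynomial.C ρ * r1 ^ i))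
        = (Polynomial.X - Polynomial.C α) * (Polynomial.C ρ * r ^ i) := by
      rw [hr1, mul_pow, ← pow_mul, mul_comm μ i]
      calc _ = (Polynomial.X - Polynomial.C α) ^ (μ + ν + 1 + w) * (Polynomial.C ρ * r1 ^ i) := by ring
        _ = _ := by rw [← hw]; ring
    rw [hl, hode]
    calc _ = Polynomial.C n * g * ((Polynomial.X - Polynomial.C α) * derivative r) - Polynomial.C m * r * ((Polynomial.X - Polynomial.C α) * derivative g) := by ring
      _ = _ := by
        rw [e1, e2]
        nth_rewrite 1 [hr1, hg1]
        ring
  have hX : (Polynomial.X - Polynomial.C α) ^ (μ + ν) ≠ 0 := pow_ne_zero _ (X_sub_C_ne_zero α)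
  have key2 := congrArg (eval α) (mul_left_cancel₀ hX key)
  simp at key2
  rw [dvd_iff_isRoot] at hr2 hg2
  have : (n * μ - m * ν) * (eval α r1 * eval α g1) = 0 := by linear_combination -key2
  simp only [mul_eq_zero, sub_eq_zero] at this
  simp only [IsRoot] at hr2 hg2
  tauto

theorem deg_ode {L : Type*} [Field L] [CharZero L] (r g : L[X]) (hr : r ≠ 0) (hg : g ≠ 0)
    (i : ℕ) (ρ m n : L)
    (hode : Polynomial.C ρ * r ^ i = Polynomial.C n * g * derivative r - Polynomial.C m * r * derivative g) :
    r.natDegree + g.natDegree ≤ i * r.natDegree + 1 ∨ n * r.natDegree = m * g.natDegree := by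
  by_contra! hcon
  obtain ⟨h1, h2⟩ := hcon
  have hco : ∀ (p : L[X]) (c : ℕ), (Polynomial.X * derivative p).coeff c = (c : L) * p.coeff c := by
    intro p c
    cases c with
    | zero => simp
    | succ c => rw [Polynomial.coeff_X_mul, coeff_derivative]; push_cast; ring
  have hdeg : ∀ p : L[X], (Polynomial.X * derivative p).natDegree ≤ p.natDegree := by
    intro p
    rw [natDegree_le_iff_coeff_eq_zero]
    intro c hc
    rw [hco, coeff_eq_zero_of_natDegree_lt hc, mul_zero]
  have e : Polynomial.X * (Polynomial.C ρ * r ^ i) = Polynomial.C n * (Polynomial.X * derivative r * g) - Polynomial.C m * (r * (Polynomial.X * derivative g)) := by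
    rw [hode]; ring
  have e2 := congrArg (fun p => Polynomial.coeff p (r.natDegree + g.natDegree)) e
  simp only [Polynomial.coeff_sub, Polynomial.coeff_C_mul] at e2
  rw [coeff_mul_add_eq_of_natDegree_le (hdeg r) le_rfl,
    coeff_mul_add_eq_of_natDegree_le le_rfl (hdeg g), hco, hco, coeff_eq_zero_of_natDegree_lt] at e2
  · have : (n * r.natDegree - m * g.natDegree) * (r.leadingCoeff * g.leadingCoeff) = 0 := by
      simp only [leadingCoeff]
      linear_combination -e2
    simp only [mul_eq_zero, sub_eq_zero, leadingCoeff_eq_zero] at this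
    tauto
  · calc _ ≤ (Polynomial.X : L[X]).natDegree + (Polynomial.C ρ * r ^ i).natDegree := natDegree_mul_le
      _ ≤ 1 + (r ^ i).natDegree := add_le_add natDegree_X_le (natDegree_C_mul_le _ _)
      _ ≤ 1 + i * r.natDegree := by gcongr; exact natDegree_pow_le
      _ < _ := by omega

theorem core {L : Type*} [Field L] [CharZero L] [IsAlgClosed L] (r g : L[X]) (hr : r ≠ 0)
    (i : ℕ) (ρ m n e : ℤ) (t : ℕ) (hρ : ρ ≠ 0) (he : 1 ≤ e) (hn : n = (i - 1) * m - e)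
    (hi : 1 ≤ i) (hm : e * t < m)
    (hode : Polynomial.C (ρ : L) * r ^ i = Polynomial.C (n : L) * g * derivative r - Polynomial.C (m : L) * r * derivative g)
    (hlt : r.natTrailingDegree < r.natDegree) (hcard : r.support.card ≤ t + 1)
    (h0 : g ≠ 0 → m * ((i - 1) * r.natTrailingDegree - g.natTrailingDegree) =
      e * r.natTrailingDegree → (g.natTrailingDegree : ℤ) ≤ (i - 1) * r.natTrailingDegree → False) :
    False := by
  have hg : g ≠ 0 := by
    rintro rfl
    simp at hode
    tauto
  obtain ⟨i, rfl⟩ : ∃ k, i = k + 1 := ⟨i - 1, by omega⟩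
  push_cast at hn h0
  simp only [add_sub_cancel_right] at hn h0
  have hmpos : 0 < m := lt_of_le_of_lt (by positivity) hm
  -- degree
  have hd : g.natDegree ≤ i * r.natDegree + 1 := by
    rcases deg_ode r g hr hg _ _ _ _ hode with h | h
    · linarith
    · have h' : n * r.natDegree = m * g.natDegree := by exact_mod_cast h
      have : m * g.natDegree ≤ m * (i * r.natDegree) := by
        rw [← h', hn]; nlinarith
      have := le_of_mul_le_mul_left this hmpos
      zify; linarith
  -- multiplicities
  have hroot0 : r.rootMultiplicity 0 = r.natTrailingDegree := rootMultiplicity_eq_natTrailingDegree'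
  have hmz : i * r.rootMultiplicity 0 + 1 ≤ g.rootMultiplicity 0 := by
    rcases local_ode 0 r g hr hg _ _ _ _ hode with h | h
    · linarith
    · by_contra hc
      have h' : n * r.rootMultiplicity 0 = m * g.rootMultiplicity 0 := by exact_mod_cast h
      rw [hroot0, rootMultiplicity_eq_natTrailingDegree'] at h' hc
      refine h0 hg ?_ ?_
      · rw [hn] at h'; linarith
      · have : g.natTrailingDegree ≤ i * r.natTrailingDegree := by omega
        exact_mod_cast this
  have hmn : ∀ β, β ≠ 0 → 0 < r.rootMultiplicity β →
      i * r.rootMultiplicity β + 1 ≤ g.rootMultiplicity β := by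
    intro β hβ hpos
    rcases local_ode β r g hr hg _ _ _ _ hode with h | h
    · linarith
    · exfalso
      have h' : n * r.rootMultiplicity β = m * g.rootMultiplicity β := by exact_mod_cast h
      have hk := mult_lt_card_support hβ _ r hr (pow_rootMultiplicity_dvd r β)
      have hk' : (r.rootMultiplicity β : ℤ) ≤ t := by
        have : r.rootMultiplicity β ≤ t := by omega
        exact_mod_cast this
      have hpos' : (1 : ℤ) ≤ r.rootMultiplicity β := by exact_mod_cast hpos
      have e1 : m * (i * r.rootMultiplicity β - g.rootMultiplicity β) = e * r.rootMultiplicity β := by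
        rw [hn] at h'; linarith
      have e2 : e * r.rootMultiplicity β < m := lt_of_le_of_lt (by gcongr) hm
      have e3 : 0 < e * r.rootMultiplicity β := by positivity
      rw [← e1] at e2 e3
      have e4 := (mul_pos_iff_of_pos_left hmpos).mp e3
      nlinarith
  have hcr : r.roots.card = r.natDegree := splits_iff_card_roots.mp (IsAlgClosed.splits r)
  obtain ⟨α, hα, hαr⟩ : ∃ α, α ≠ 0 ∧ α ∈ r.roots := by
    classical
    by_contra! hc
    have : r.roots = Multiset.replicate r.roots.card 0 :=
      Multiset.eq_replicate_card.mpr fun b hb => by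
        by_contra hb0; exact hc b hb0 hb
    have h2 := count_roots r (a := 0)
    rw [this, Multiset.count_replicate_self, hcr, hroot0] at h2
    omega
  have hle : i • r.roots + {0, α} ≤ g.roots := by
    classical
    rw [Multiset.le_iff_count]
    intro β
    have hc2 : Multiset.count β ({0, α} : Multiset L) =
        (if β = 0 then 1 else 0) + (if β = α then 1 else 0) := by
      simp only [Multiset.insert_eq_cons, Multiset.count_cons, Multiset.count_singleton]
      omega
    rw [Multiset.count_add, Multiset.count_nsmul, count_roots, count_roots, hc2]
    by_cases hβ : β = 0
    · subst hβ
      simpa [hα.symm] using hmz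
    · by_cases hpos : 0 < r.rootMultiplicity β
      · have := hmn β hβ hpos
        simp only [hβ, if_false]
        split_ifs <;> omega
      · have hne : β ≠ α := by
          rintro rfl
          rw [← count_roots, Multiset.count_pos] at hpos
          exact hpos hαr
        simp only [hβ, hne, if_false]
        have : r.rootMultiplicity β = 0 := by omega
        simp [this]
  have hc := Multiset.card_le_card hle
  have hc' := card_roots' g
  simp [hcr] at hc
  omega
end CotaAux

namespace CotaAux
open MvPolynomial

theorem wh_of_homog {K : Type*} [Field K] {ρ σ : ℤ} {P : MvPolynomial (Fin 2) K}
    (hP : ∀ p ∈ Supp P, ∀ q ∈ Supp P,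
    ρ * (p.1 : ℤ) + σ * (p.2 : ℤ) = ρ * (q.1 : ℤ) + σ * (q.2 : ℤ)) {p : ℕ × ℕ} (hp : p ∈ Supp P) :
    IsWeightedHomogeneous ![ρ, σ] P (ρ * (p.1 : ℤ) + σ * (p.2 : ℤ)) := by
  intro d hd
  have hd2 : d = Finsupp.single 0 (d 0) + Finsupp.single 1 (d 1) := by
    ext k; fin_cases k <;> simp
  have hm : ((d 0, d 1) : ℕ × ℕ) ∈ Supp P := by
    change coeff (Finsupp.single 0 (d 0) + Finsupp.single 1 (d 1)) P ≠ 0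
    rwa [← hd2]
  have := hP _ hm _ hp
  rw [← this, Finsupp.weight_apply, Finsupp.sum_fintype _ _ (by simp)]
  simp [Fin.sum_univ_two]
  ring

theorem euler {K : Type*} [Field K] {ρ σ v : ℤ} {P : MvPolynomial (Fin 2) K}
    (h : IsWeightedHomogeneous ![ρ, σ] P v) :
    C (ρ : K) * (X 0 * pderiv 0 P) + C (σ : K) * (X 1 * pderiv 1 P) = C (v : K) * P := by
  have key : ∀ d ∈ P.support, C (ρ : K) * (X 0 * pderiv 0 (monomial d (coeff d P))) +
      C (σ : K) * (X 1 * pderiv 1 (monomial d (coeff d P))) =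
      C (v : K) * monomial d (coeff d P) := by
    intro d hd
    have hw := h (mem_support_iff.mp hd)
    rw [Finsupp.weight_apply, Finsupp.sum_fintype _ _ (by simp)] at hw
    simp only [Fin.sum_univ_two, Matrix.cons_val_zero, Matrix.cons_val_one, nsmul_eq_mul] at hw
    rw [X_mul_pderiv_monomial, X_mul_pderiv_monomial, ← hw]
    simp only [nsmul_eq_mul, ← map_natCast (C : K →+* MvPolynomial (Fin 2) K), Int.cast_add,
      Int.cast_mul, Int.cast_natCast, map_add, map_mul]
    ring
  have hs := P.support_sum_monomial_coeff
  have hs' : ∑ d ∈ P.support, (C (ρ : K) * (X 0 * pderiv 0 (monomial d (coeff d P))) +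
      C (σ : K) * (X 1 * pderiv 1 (monomial d (coeff d P)))) =
      ∑ d ∈ P.support, C (v : K) * monomial d (coeff d P) := Finset.sum_congr rfl key
  simp only [Finset.sum_add_distrib, ← Finset.mul_sum, ← map_sum] at hs'
  rwa [hs] at hs'

/-- Dehomogenisation `x = 1`. -/
def deh (K L : Type*) [Field K] [Field L] [Algebra K L] :
    MvPolynomial (Fin 2) K →ₐ[K] Polynomial L :=
  aeval ![1, Polynomial.X]

theorem deh_pderiv {K L : Type*} [Field K] [Field L] [Algebra K L] (P : MvPolynomial (Fin 2) K) :
    deh K L (pderiv 1 P) = Polynomial.derivative (deh K L P) := by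
  induction P using MvPolynomial.induction_on with
  | C a =>
    simp [deh, Polynomial.algebraMap_apply]
  | add p q hp hq => simp [hp, hq]
  | mul_X p k hp =>
    rw [Derivation.leibniz, map_add, map_mul, Polynomial.derivative_mul]
    simp only [smul_eq_mul, map_mul, hp]
    fin_cases k
    · simp [deh, pderiv_X]
    · simp [deh, pderiv_X]
      ring

theorem deh_coeff {K L : Type*} [Field K] [Field L] [Algebra K L] (P : MvPolynomial (Fin 2) K)
    (j : ℕ) : (deh K L P).coeff j =
      ∑ d ∈ P.support, if d 1 = j then algebraMap K L (coeff d P) else 0 := by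
  conv_lhs => rw [← P.support_sum_monomial_coeff]
  rw [map_sum, Polynomial.finsetSum_coeff]
  refine Finset.sum_congr rfl fun d _ => ?_
  rw [deh, aeval_monomial, Finsupp.prod_fintype _ _ (by simp)]
  simp only [Fin.prod_univ_two, Matrix.cons_val_zero, Matrix.cons_val_one, one_pow, one_mul,
    Polynomial.algebraMap_apply, Polynomial.coeff_C_mul, Polynomial.coeff_X_pow]
  by_cases h : d 1 = j
  · simp [h]
  · simp [h, Ne.symm h]

theorem deh_coeff_ne {K L : Type*} [Field K] [Field L] [Algebra K L] {ρ σ : ℤ} (hρ : 0 < ρ)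
    {P : MvPolynomial (Fin 2) K} (hP : ∀ p ∈ Supp P, ∀ q ∈ Supp P,
    ρ * (p.1 : ℤ) + σ * (p.2 : ℤ) = ρ * (q.1 : ℤ) + σ * (q.2 : ℤ)) (j : ℕ) :
    (deh K L P).coeff j ≠ 0 ↔ ∃ u, (u, j) ∈ Supp P := by
  have hmem : ∀ d : Fin 2 →₀ ℕ, d ∈ P.support → ((d 0, d 1) : ℕ × ℕ) ∈ Supp P := by
    intro d hd
    have hd2 : d = Finsupp.single 0 (d 0) + Finsupp.single 1 (d 1) := by
      ext k; fin_cases k <;> simp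
    change coeff (Finsupp.single 0 (d 0) + Finsupp.single 1 (d 1)) P ≠ 0
    rw [← hd2]; exact mem_support_iff.mp hd
  rw [deh_coeff]
  constructor
  · intro h
    obtain ⟨d, hd, hd2⟩ := Finset.exists_ne_zero_of_sum_ne_zero h
    have : d 1 = j := by by_contra hc; simp [hc] at hd2
    exact ⟨d 0, this ▸ hmem d hd⟩
  · rintro ⟨u, hu⟩
    have hu' : coeff (Finsupp.single 0 u + Finsupp.single 1 j) P ≠ 0 := hu
    rw [Finset.sum_eq_single (Finsupp.single 0 u + Finsupp.single 1 j)]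
    · simpa using hu'
    · intro d hd hne
      rw [if_neg]
      intro hj
      apply hne
      have h1 := hP _ (hmem d hd) _ hu
      simp only [hj, add_left_inj] at h1
      have h2 := mul_left_cancel₀ hρ.ne' h1
      have h3 : d 0 = u := by exact_mod_cast h2
      ext k; fin_cases k <;> simp [h3, hj]
    · intro hn
      exact absurd (mem_support_iff.mpr hu') hn

set_option maxHeartbeats 1000000 in
theorem step {K : Type*} [Field K] [CharZero K] {ρ σ : ℤ} {R G : MvPolynomial (Fin 2) K}
    {a b a' b' i : ℕ} (hgcd : Int.gcd ρ σ = 1) (hρ : 0 < ρ) (hρσ : ρ + σ < 0)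
    (hR : IsHomog ρ σ R) (hmono : ¬ IsMonomial R) (hst : IsSt ρ σ R (a, b))
    (hen : IsEn ρ σ R (a', b')) (hdiag : b' < a')
    (hval : ρ ≤ ρ * (a' : ℤ) + σ * (b' : ℤ)) (hi : 1 ≤ i) (hG : IsHomog ρ σ G)
    (hJ : Jb G R = R ^ i) : (b' : ℤ) ≤ ((a' : ℤ) - (b' : ℤ) - 1) ^ 2 := by
  obtain ⟨⟨hs1, hs2⟩, hs3⟩ := hst
  obtain ⟨⟨he1, he2⟩, he3⟩ := hen
  have hlead : ∀ q ∈ Supp R, q ∈ LeadSupp ρ σ R := fun q hq => ⟨hq, by rw [← hs2]; exact hR _ hq _ hs1⟩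
  have hbmin : ∀ q ∈ Supp R, b ≤ q.2 := fun q hq => hs3 q (hlead q hq)
  have hbmax : ∀ q ∈ Supp R, q.2 ≤ b' := fun q hq => he3 q (hlead q hq)
  have hw := hR _ hs1 _ he1
  simp only at hw
  have hbb : b < b' := by
    by_contra hc
    apply hmono
    intro p hp q hq
    have h1 := hbmin p hp
    have h2 := hbmax p hp
    have h3 := hbmin q hq
    have h4 := hbmax q hq
    have h5 : p.2 = q.2 := by omega
    have h6 := hR _ hp _ hq
    rw [h5, add_left_inj] at h6
    have h7 := mul_left_cancel₀ hρ.ne' h6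
    exact Prod.ext (by exact_mod_cast h7) h5
  have hcop : IsCoprime ρ σ := Int.isCoprime_iff_gcd_eq_one.mpr hgcd
  have hdvd : ∀ q ∈ Supp R, ∃ k : ℕ, (q.2 : ℤ) = b + ρ * k := by
    intro q hq
    have h1 := hR _ hq _ hs1
    simp only at h1
    have h2 : ρ ∣ σ * ((q.2 : ℤ) - b) := ⟨(a : ℤ) - q.1, by linarith⟩
    obtain ⟨k, hk⟩ := hcop.dvd_of_dvd_mul_left h2
    have h3 : (b : ℤ) ≤ q.2 := by exact_mod_cast hbmin q hq
    have h4 : 0 ≤ k := by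
      by_contra hc
      push Not at hc
      nlinarith
    lift k to ℕ using h4
    exact ⟨k, by linarith⟩
  obtain ⟨t, ht⟩ := hdvd _ he1
  simp only at ht
  have hbb' : (b : ℤ) < b' := by exact_mod_cast hbb
  have ht1 : (1 : ℤ) ≤ t := by
    by_contra hc
    have : (t : ℤ) = 0 := by omega
    rw [this] at ht
    linarith
  have hat : (a' : ℤ) - a = -σ * t := by
    have : ρ * ((a' : ℤ) - a) = ρ * (-σ * t) := by
      rw [ht] at hw; linarith
    exact mul_left_cancel₀ hρ.ne' this
  by_contra hcon
  push Not at hcon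
  set e : ℤ := -σ - ρ with he
  set m : ℤ := ρ * a + σ * b with hm
  have he1' : 1 ≤ e := by omega
  have hmρ : ρ ≤ m := by rw [hw]; exact hval
  have hdiag' : (b' : ℤ) + 1 ≤ a' := by exact_mod_cast hdiag
  set D : ℤ := (a' : ℤ) - b' - 1 with hD
  have hD0 : 0 ≤ D := by omega
  have hDρ : D < ρ := by
    by_contra hc
    push Not at hc
    have h1 : e * b' ≤ ρ * D := by
      rw [hw] at hmρ
      simp only [he, hD]
      nlinarith
    nlinarith
  have hdd : (a' : ℤ) - b' = a - b + e * t := by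
    simp only [he]; linarith
  have hdpos : 1 ≤ (a : ℤ) - b := by
    by_contra hc
    have h1 : (a : ℤ) - b ≤ 0 := by omega
    have h2 : m = ρ * (a - b) - e * b := by simp only [hm, he]; ring
    have h3 : 0 ≤ e * (b : ℤ) := by positivity
    nlinarith
  have het : 1 ≤ e * t := by nlinarith
  have hm1 : e * t < m := by omega
  have hm2 : (a : ℤ) - b < m := by omega
  -- passing to one variable
  have hR0 : R ≠ 0 := by
    rintro rfl
    exact hs1 (by simp)
  have hG0 : G ≠ 0 := by
    rintro rfl
    have : R ^ i = 0 := by rw [← hJ]; simp [Jb]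
    exact pow_ne_zero _ hR0 this
  obtain ⟨d0, hd0⟩ := MvPolynomial.ne_zero_iff.mp hG0
  have hd0S : ((d0 0, d0 1) : ℕ × ℕ) ∈ Supp G := by
    have hd2 : d0 = Finsupp.single 0 (d0 0) + Finsupp.single 1 (d0 1) := by
      ext k; fin_cases k <;> simp
    change coeff (Finsupp.single 0 (d0 0) + Finsupp.single 1 (d0 1)) G ≠ 0
    rwa [← hd2]
  obtain ⟨n, hn⟩ : ∃ n : ℤ, n = ρ * ((d0 0 : ℕ) : ℤ) + σ * ((d0 1 : ℕ) : ℤ) := ⟨_, rfl⟩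
  have hwR : IsWeightedHomogeneous ![ρ, σ] R m := wh_of_homog hR hs1
  have hwG : IsWeightedHomogeneous ![ρ, σ] G n := by rw [hn]; exact wh_of_homog hG hd0S
  have hwJ : IsWeightedHomogeneous ![ρ, σ] (Jb G R) (n + m - ρ - σ) := by
    have x1 := (hwG.pderiv (i := 0) (n' := n - ρ) (by simp)).mul
      (hwR.pderiv (i := 1) (n' := m - σ) (by simp))
    have x2 := (hwR.pderiv (i := 0) (n' := m - ρ) (by simp)).mul
      (hwG.pderiv (i := 1) (n' := n - σ) (by simp))
    rw [show n - ρ + (m - σ) = n + m - ρ - σ by ring] at x1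
    rw [show m - ρ + (n - σ) = n + m - ρ - σ by ring] at x2
    have := Submodule.sub_mem (weightedHomogeneousSubmodule K ![ρ, σ] (n + m - ρ - σ)) x1 x2
    exact this
  have hnm : n = ((i : ℤ) - 1) * m - e := by
    rw [hJ] at hwJ
    have := hwJ.inj_right (pow_ne_zero _ hR0) (hwR.pow i)
    simp only [nsmul_eq_mul] at this
    simp only [he]; linarith
  have hode2 : C (ρ : K) * (X 0 * R ^ i) = C (n : K) * G * pderiv 1 R - C (m : K) * R * pderiv 1 G := by
    have E1 := euler hwR
    have E2 := euler hwG
    rw [← hJ, ← E1, ← E2, Jb]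
    ring
  let L := AlgebraicClosure K
  have : CharZero L := charZero_of_injective_algebraMap (algebraMap K L).injective
  have hdC : ∀ z : ℤ, deh K L (C (z : K)) = Polynomial.C (z : L) := by
    intro z
    rw [deh, map_intCast, map_intCast, map_intCast]
  have hode := congrArg (deh K L) hode2
  simp only [map_mul, map_sub, map_pow, deh_pderiv, hdC] at hode
  have hX0 : deh K L (X 0) = 1 := by simp [deh]
  rw [hX0, one_mul] at hode
  have hcR := deh_coeff_ne (L := L) hρ hR
  have hcG := deh_coeff_ne (L := L) hρ hG
  have hr0 : deh K L R ≠ 0 := by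
    intro h
    have := (hcR b).mpr ⟨a, hs1⟩
    rw [h] at this
    simp at this
  have hdeg : (deh K L R).natDegree = b' := by
    apply le_antisymm
    · rw [Polynomial.natDegree_le_iff_coeff_eq_zero]
      intro N hN
      by_contra hc
      obtain ⟨u, hu⟩ := (hcR N).mp hc
      have := hbmax _ hu
      simp only at this
      omega
    · exact Polynomial.le_natDegree_of_ne_zero ((hcR b').mpr ⟨a', he1⟩)
  have htr : (deh K L R).natTrailingDegree = b := by
    apply le_antisymm
    · exact Polynomial.natTrailingDegree_le_of_ne_zero ((hcR b).mpr ⟨a, hs1⟩)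
    · apply Polynomial.le_natTrailingDegree hr0
      intro N hN
      by_contra hc
      obtain ⟨u, hu⟩ := (hcR N).mp hc
      have := hbmin _ hu
      simp only at this
      omega
  have hcard : (deh K L R).support.card ≤ t + 1 := by
    have hsub : (deh K L R).support ⊆ (Finset.range (t + 1)).image (fun k => b + ρ.toNat * k) := by
      intro N hN
      obtain ⟨u, hu⟩ := (hcR N).mp (Polynomial.mem_support_iff.mp hN)
      obtain ⟨k, hk⟩ := hdvd _ hu
      have hle := hbmax _ hu
      simp only at hk hle
      rw [Finset.mem_image]
      refine ⟨k, ?_, ?_⟩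
      · rw [Finset.mem_range]
        have : (N : ℤ) ≤ b' := by exact_mod_cast hle
        have h2 : ρ * (k : ℤ) ≤ ρ * t := by linarith
        have h3 := le_of_mul_le_mul_left h2 hρ
        omega
      · zify
        rw [Int.toNat_of_nonneg hρ.le]
        exact hk.symm
    calc _ ≤ _ := Finset.card_le_card hsub
      _ ≤ _ := Finset.card_image_le
      _ = _ := Finset.card_range _
  refine core (deh K L R) (deh K L G) hr0 i ρ m n e t hρ.ne' he1' hnm hi hm1 hode
    (by rw [hdeg, htr]; exact hbb) hcard ?_
  rw [htr]
  intro hg hmul hle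
  obtain ⟨u, hu⟩ := (hcG (deh K L G).natTrailingDegree).mp (by
    have := Polynomial.trailingCoeff_nonzero_iff_nonzero.mpr hg
    exact this)
  generalize (deh K L G).natTrailingDegree = ν at *
  have h1 := hG _ hu _ hd0S
  simp only at h1
  rw [← hn, hnm] at h1
  have h2 : ρ ∣ σ * (((i : ℤ) - 1) * b - ν + 1) :=
    ⟨u - ((i : ℤ) - 1) * a - 1, by simp only [he, hm] at h1; linarith⟩
  obtain ⟨κ, hκ⟩ := hcop.dvd_of_dvd_mul_left h2
  have hκ1 : 1 ≤ κ := by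
    by_contra hc
    have hκ0 : κ ≤ 0 := by omega
    have hρκ := mul_nonpos_of_nonneg_of_nonpos hρ.le hκ0
    linarith
  have h3 : ρ * (m * κ) = ρ * (a - b) := by
    have : ((i : ℤ) - 1) * b - ν = ρ * κ - 1 := by linarith
    rw [this] at hmul
    simp only [he] at hmul
    have hm' : m = ρ * a + σ * b := hm
    linarith
  have h4 := mul_left_cancel₀ hρ.ne' h3
  nlinarith

end CotaAux

/-- Proposition "cota": if `(a',b')` is a possible `A₀′`, then `b' < a'` and
`b' ≤ (a' − b' − 1)²`. -/
theorem stmt14 (K : Type*) [Field K] [CharZero K]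
    (a' b' : ℕ) (h : PossibleA0 K (a', b')) :
    b' < a' ∧ (b' : ℤ) ≤ ((a' : ℤ) - (b' : ℤ) - 1) ^ 2 := by
  obtain ⟨k, ch, hk⟩ := h
  rcases Nat.eq_zero_or_pos k with rfl | hpos
  · obtain ⟨l, hl, hC⟩ := ch.hC0
    rw [hk, Prod.mk.injEq] at hC
    obtain ⟨rfl, rfl⟩ := hC
    exact ⟨hl, by simpa using sq_nonneg _⟩
  · have hdiag := ch.hdiag k hpos le_rfl
    have hval := ch.hval k hpos le_rfl
    have hen := ch.hen k hpos le_rfl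
    rw [hk] at hdiag hval hen
    obtain ⟨hgcd, hρ, hρσ⟩ := ch.hdir k hpos le_rfl
    obtain ⟨G, i, hi, hG, hJ⟩ := ch.hG k hpos le_rfl
    exact ⟨hdiag, CotaAux.step hgcd hρ hρσ (ch.hhom k hpos le_rfl) (ch.hmono k hpos le_rfl)
      (ch.hst k hpos le_rfl) hen hdiag hval hi hG hJ⟩

end
end

section
/- For every integer g ≥ 1, the set of points (a′,b′) ∈ ℕ×ℕ with a′ − b′ = g that are possible A0′ (i.e. arise as end points of admissible chains) is finite. -/
open MvPolynomial

noncomputable section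

variable {K : Type*} [Field K] [CharZero K]

lemma term_bound {L : Type*} [Field L] [CharZero L] (α : L) (hα : α ≠ 0) (S : Finset ℕ) :
    ∀ (m : ℕ) (r : Polynomial L), r ≠ 0 → r.support ⊆ S →
      (Polynomial.X - Polynomial.C α) ^ m ∣ r → m < S.card := by
  induction S using Finset.induction_on with
  | empty =>
    intro m r hr hs _
    exact absurd (Polynomial.support_eq_empty.1 (Finset.subset_empty.1 hs)) hr
  | insert j S hj ih =>
    intro m r hr hs hd
    rw [Finset.card_insert_of_notMem hj]
    rcases m with _ | m
    · omega
    set r2 : Polynomial L := Polynomial.X * Polynomial.derivative r - Polynomial.C (j : L) * r with hr2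
    have hco : ∀ n, r2.coeff n = ((n : L) - j) * r.coeff n := by
      intro n
      rw [hr2, Polynomial.coeff_sub, Polynomial.coeff_C_mul]
      rcases n with _ | n
      · simp
      · rw [Polynomial.coeff_X_mul, Polynomial.coeff_derivative]; push_cast; ring
    have hd2 : (Polynomial.X - Polynomial.C α) ^ m ∣ r2 := by
      obtain ⟨w, hw⟩ := hd
      rw [hr2, hw]
      refine ⟨Polynomial.X * ((m+1 : Polynomial L) * w + (Polynomial.X - Polynomial.C α) * Polynomial.derivative w)
        - Polynomial.C (j : L) * ((Polynomial.X - Polynomial.C α) * w), ?_⟩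
      simp only [Polynomial.derivative_mul, Polynomial.derivative_X_sub_C_pow]
      simp; ring
    by_cases h0 : r2 = 0
    · exfalso
      have hmon : r = Polynomial.C (r.coeff j) * Polynomial.X ^ j := by
        ext n
        rw [Polynomial.coeff_C_mul_X_pow]
        split_ifs with h
        · rw [h]
        · have := hco n
          rw [h0, Polynomial.coeff_zero] at this
          rcases mul_eq_zero.1 this.symm with h1 | h1
          · exact absurd (by exact_mod_cast sub_eq_zero.1 h1) h
          · exact h1
      have hcj : r.coeff j ≠ 0 := fun h => hr (by rw [hmon, h]; simp)
      have hroot : r.eval α = 0 := by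
        obtain ⟨w, hw⟩ := hd
        rw [hw]; simp
      rw [hmon] at hroot
      simp [hcj, hα] at hroot
    · have := ih m r2 h0 ?_ hd2
      · omega
      · intro n hn
        rw [Polynomial.mem_support_iff, hco] at hn
        have h1 := hs (Polynomial.mem_support_iff.2 (right_ne_zero_of_mul hn))
        rcases Finset.mem_insert.1 h1 with h | h
        · subst h; simp at hn
        · exact h

lemma local_order {L : Type*} [Field L] [CharZero L] (r γ : Polynomial L) (hr : r ≠ 0) (hγ : γ ≠ 0)
    (A v ρ α : L) (hρ : ρ ≠ 0) (i : ℕ)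
    (eq : Polynomial.C A * γ * Polynomial.derivative r - Polynomial.C v * r * Polynomial.derivative γ
      = Polynomial.C ρ * r ^ i) :
    A * (r.rootMultiplicity α : L) = v * (γ.rootMultiplicity α : L) ∨
      γ.rootMultiplicity α + r.rootMultiplicity α = i * r.rootMultiplicity α + 1 := by
  obtain ⟨w, hw, hw0⟩ := Polynomial.exists_eq_pow_rootMultiplicity_mul_and_not_dvd r hr α
  obtain ⟨u, hu, hu0⟩ := Polynomial.exists_eq_pow_rootMultiplicity_mul_and_not_dvd γ hγ α
  set m := r.rootMultiplicity α
  set n := γ.rootMultiplicity α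
  rw [Polynomial.dvd_iff_isRoot, Polynomial.IsRoot] at hw0 hu0
  by_cases h : A * (m : L) = v * n
  · exact Or.inl h
  right
  set T := Polynomial.X - Polynomial.C α with hT
  have key : ∀ (m : ℕ) (w : Polynomial L), T * Polynomial.derivative (T ^ m * w)
      = T ^ m * (Polynomial.C (m : L) * w + T * Polynomial.derivative w) := by
    intro m w
    rcases m with _ | m
    · simp
    · rw [hT]; simp only [Polynomial.derivative_mul, Polynomial.derivative_X_sub_C_pow]
      simp; ring
  set E := Polynomial.C A * u * (Polynomial.C (m : L) * w + T * Polynomial.derivative w)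
    - Polynomial.C v * w * (Polynomial.C (n : L) * u + T * Polynomial.derivative u) with hE
  have e1 : T ^ (n + m) * E = T ^ (i * m + 1) * (Polynomial.C ρ * w ^ i) := by
    have h1 := key m w
    have h2 := key n u
    rw [← hw] at h1
    rw [← hu] at h2
    have h3 : T * (Polynomial.C A * γ * Polynomial.derivative r - Polynomial.C v * r * Polynomial.derivative γ)
      = T * (Polynomial.C ρ * r ^ i) := by rw [eq]
    have h4 : T ^ (i * m + 1) * (Polynomial.C ρ * w ^ i) = T * (Polynomial.C ρ * r ^ i) := by
      rw [hw]; ring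
    rw [h4, ← h3, hE]
    have h5 : T * (Polynomial.C A * γ * Polynomial.derivative r - Polynomial.C v * r * Polynomial.derivative γ)
      = Polynomial.C A * γ * (T * Polynomial.derivative r) - Polynomial.C v * r * (T * Polynomial.derivative γ) := by ring
    rw [h5, h1, h2]
    linear_combination (-(Polynomial.C A * (T ^ m * (Polynomial.C (m : L) * w + T * Polynomial.derivative w)))) * hu
      + (Polynomial.C v * (T ^ n * (Polynomial.C (n : L) * u + T * Polynomial.derivative u))) * hw
  have hEa : E.eval α ≠ 0 := by
    have : E.eval α = (A * m - v * n) * (u.eval α * w.eval α) := by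
      rw [hE]; simp [hT]; ring
    rw [this]
    exact mul_ne_zero (sub_ne_zero.2 h) (mul_ne_zero hu0 hw0)
  have hFa : (Polynomial.C ρ * w ^ i).eval α ≠ 0 := by
    simp [hρ]; intro h; exact absurd h hw0
  have mul : ∀ (N : ℕ) (E : Polynomial L), E.eval α ≠ 0 → (T ^ N * E).rootMultiplicity α = N := by
    intro N E hE
    have hE0 : E ≠ 0 := by rintro rfl; simp at hE
    rw [Polynomial.rootMultiplicity_mul (mul_ne_zero (pow_ne_zero _ (Polynomial.X_sub_C_ne_zero α)) hE0),
      Polynomial.rootMultiplicity_X_sub_C_pow, Polynomial.rootMultiplicity_eq_zero hE]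
    rfl
  rw [← mul (n + m) E hEa, e1, mul _ _ hFa]

lemma inf_order {L : Type*} [Field L] [CharZero L] (r γ : Polynomial L) (hr : r ≠ 0) (hγ : γ ≠ 0)
    (A v ρ : L) (hρ : ρ ≠ 0) (i : ℕ)
    (eq : Polynomial.C A * γ * Polynomial.derivative r - Polynomial.C v * r * Polynomial.derivative γ
      = Polynomial.C ρ * r ^ i) :
    A * (r.natDegree : L) = v * (γ.natDegree : L) ∨
      γ.natDegree + r.natDegree = i * r.natDegree + 1 := by
  by_cases h : A * (r.natDegree : L) = v * (γ.natDegree : L)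
  · exact Or.inl h
  right
  have hX : ∀ p : Polynomial L, (Polynomial.X * Polynomial.derivative p).natDegree ≤ p.natDegree ∧
      (Polynomial.X * Polynomial.derivative p).coeff p.natDegree = p.natDegree * p.leadingCoeff := by
    intro p
    have hco : ∀ n, (Polynomial.X * Polynomial.derivative p).coeff n = n * p.coeff n := by
      intro n
      rcases n with _ | n
      · simp
      · rw [Polynomial.coeff_X_mul, Polynomial.coeff_derivative]; push_cast; ring
    refine ⟨?_, by rw [hco]; rfl⟩
    rw [Polynomial.natDegree_le_iff_coeff_eq_zero]
    intro n hn
    rw [hco, Polynomial.coeff_eq_zero_of_natDegree_lt hn, mul_zero]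
  have h3 : Polynomial.C A * (γ * (Polynomial.X * Polynomial.derivative r)) - Polynomial.C v * ((Polynomial.X * Polynomial.derivative γ) * r)
      = Polynomial.X * (Polynomial.C ρ * r ^ i) := by rw [← eq]; ring
  have hdeg : (Polynomial.X * (Polynomial.C ρ * r ^ i)).natDegree = i * r.natDegree + 1 := by
    rw [Polynomial.natDegree_X_mul (mul_ne_zero (Polynomial.C_ne_zero.2 hρ) (pow_ne_zero _ hr)),
      Polynomial.natDegree_C_mul hρ, Polynomial.natDegree_pow]
  rw [← hdeg, ← h3]
  symm
  apply Polynomial.natDegree_eq_of_le_of_coeff_ne_zero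
  · refine (Polynomial.natDegree_sub_le _ _).trans (max_le ?_ ?_)
    · exact (Polynomial.natDegree_C_mul_le _ _).trans (Polynomial.natDegree_mul_le.trans
        (Nat.add_le_add_left (hX r).1 _))
    · exact (Polynomial.natDegree_C_mul_le _ _).trans (Polynomial.natDegree_mul_le.trans
        (Nat.add_le_add_right (hX γ).1 _))
  · rw [Polynomial.coeff_sub, Polynomial.coeff_C_mul, Polynomial.coeff_C_mul,
      Polynomial.coeff_mul_add_eq_of_natDegree_le le_rfl (hX r).1,
      Polynomial.coeff_mul_add_eq_of_natDegree_le (hX γ).1 le_rfl, (hX r).2, (hX γ).2]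
    have : A * (γ.coeff γ.natDegree * (r.natDegree * r.leadingCoeff)) - v * (γ.natDegree * γ.leadingCoeff * r.coeff r.natDegree)
      = (A * r.natDegree - v * γ.natDegree) * (γ.leadingCoeff * r.leadingCoeff) := by
      simp only [Polynomial.coeff_natDegree]; ring
    rw [this]
    exact mul_ne_zero (sub_ne_zero.2 h) (mul_ne_zero (Polynomial.leadingCoeff_ne_zero.2 hγ) (Polynomial.leadingCoeff_ne_zero.2 hr))

lemma core {L : Type*} [Field L] [IsAlgClosed L] [CharZero L] (r γ : Polynomial L)
    (v s D : ℤ) (ρ b t h : ℕ) (hρ : 0 < ρ) (hs : 0 < s) (hD : 0 < D) (ht : 1 ≤ t)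
    (hv : v = ρ * D - s * b) (hv' : D + t * s < v)
    (hγ0 : γ ≠ 0) (hdeg : r.natDegree = b + t * ρ) (hlow : r.rootMultiplicity 0 = b)
    (hr : ∀ j, r.coeff j ≠ 0 → ∃ k, k ≤ t ∧ j = b + ρ * k)
    (hγ : ∀ j, γ.coeff j ≠ 0 → ∃ e : ℤ, (j : ℤ) = 1 + h * b + e * ρ)
    (eq : Polynomial.C ((h * v - s : ℤ) : L) * γ * Polynomial.derivative r
      - Polynomial.C (v : L) * r * Polynomial.derivative γ = Polynomial.C ((ρ : ℕ) : L) * r ^ (h + 1)) :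
    False := by
  have hr0 : r ≠ 0 := by
    rintro rfl
    simp at hdeg
    have := Nat.mul_pos ht hρ
    omega
  have hρL : ((ρ : ℕ) : L) ≠ 0 := by exact_mod_cast hρ.ne'
  have hρZ : (0 : ℤ) < ρ := by exact_mod_cast hρ
  have hts : 0 < (t : ℤ) * s := by positivity
  have hvpos : 0 < v := by linarith
  -- infinity
  have hinf : γ.natDegree = h * r.natDegree + 1 := by
    rcases inf_order r γ hr0 hγ0 _ _ _ hρL _ eq with h1 | h1
    · exfalso
      obtain ⟨e, he⟩ := hγ γ.natDegree (by simpa using hγ0)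
      have h2 : (h * v - s) * (r.natDegree : ℤ) = v * (γ.natDegree : ℤ) := by exact_mod_cast h1
      rw [he, hdeg] at h2
      push_cast at h2
      have h3 : (ρ : ℤ) * (D + t * s) = ρ * (v * (h * t - e)) := by
        linear_combination - h2 - hv
      have h4 := mul_left_cancel₀ hρZ.ne' h3
      have h5 := Int.le_of_dvd (by linarith) (Dvd.intro _ h4.symm)
      linarith
    · rw [add_mul] at h1; omega
  -- zero
  have hzero : γ.rootMultiplicity 0 = h * b + 1 := by
    rcases local_order r γ hr0 hγ0 _ _ _ 0 hρL _ eq with h1 | h1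
    · exfalso
      have hc : γ.coeff (γ.rootMultiplicity 0) ≠ 0 := by
        rw [Polynomial.rootMultiplicity_eq_natTrailingDegree']
        exact Polynomial.trailingCoeff_nonzero_iff_nonzero.2 hγ0
      obtain ⟨e, he⟩ := hγ _ hc
      rw [hlow] at h1
      have h2 : (h * v - s) * (b : ℤ) = v * (γ.rootMultiplicity 0 : ℤ) := by exact_mod_cast h1
      rw [he] at h2
      have h3 : (ρ : ℤ) * D = ρ * (v * (- e)) := by
        linear_combination - h2 - hv
      have h4 := mul_left_cancel₀ hρZ.ne' h3
      have h5 := Int.le_of_dvd (by linarith) (Dvd.intro _ h4.symm)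
      linarith
    · rw [hlow, add_mul] at h1; omega
  -- other roots
  have hoth : ∀ α, α ≠ 0 → r.IsRoot α → h * r.rootMultiplicity α + 1 ≤ γ.rootMultiplicity α := by
    intro α hα hroot
    have hm := (Polynomial.rootMultiplicity_pos hr0).2 hroot
    rcases local_order r γ hr0 hγ0 _ _ _ α hρL _ eq with h1 | h1
    · exfalso
      have hle : r.rootMultiplicity α ≤ t := by
        have := term_bound α hα ((Finset.range (t+1)).image (fun k => b + ρ * k))
          _ r hr0 (by
            intro j hj
            obtain ⟨k, hk, hj⟩ := hr j (Polynomial.mem_support_iff.1 hj)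
            exact Finset.mem_image.2 ⟨k, Finset.mem_range.2 (by omega), hj.symm⟩)
          (Polynomial.pow_rootMultiplicity_dvd r α)
        have h2 := Finset.card_image_le (s := Finset.range (t+1)) (f := fun k => b + ρ * k)
        rw [Finset.card_range] at h2
        omega
      have h2 : (h * v - s) * (r.rootMultiplicity α : ℤ) = v * (γ.rootMultiplicity α : ℤ) := by
        exact_mod_cast h1
      have h3 : s * (r.rootMultiplicity α : ℤ) = v * (h * (r.rootMultiplicity α : ℤ) - γ.rootMultiplicity α) := by
        linear_combination - h2
      have h4 := Int.le_of_dvd (by positivity) (Dvd.intro _ h3.symm)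
      have h5 : (r.rootMultiplicity α : ℤ) ≤ t := by exact_mod_cast hle
      nlinarith
    · rw [add_mul] at h1; omega
  classical
  have hcard : r.roots.card = r.natDegree := (IsAlgClosed.splits r).natDegree_eq_card_roots.symm
  obtain ⟨α, hα, hroot⟩ : ∃ α, α ≠ 0 ∧ r.IsRoot α := by
    by_contra hcon
    push Not at hcon
    have h1 : r.roots = Multiset.replicate r.roots.card 0 := by
      refine Multiset.eq_replicate_card.2 ?_
      intro x hx
      by_contra hx0
      exact hcon x hx0 (Polynomial.isRoot_of_mem_roots hx)
    have h2 : r.roots.count 0 = r.roots.card := by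
      conv_lhs => rw [h1]
      rw [Multiset.count_replicate_self]
    rw [Polynomial.count_roots, hlow, hcard, hdeg] at h2
    have := Nat.mul_pos ht hρ
    omega
  have hle : h • r.roots + ({0} + {α}) ≤ γ.roots := by
    rw [Multiset.le_iff_count]
    intro β
    simp only [Multiset.count_add, Multiset.count_nsmul, Polynomial.count_roots, Multiset.count_singleton]
    by_cases hβ0 : β = 0
    · subst hβ0
      rw [if_pos rfl, if_neg hα.symm, hlow, hzero]
    · rw [if_neg hβ0]
      by_cases hβ : r.IsRoot β
      · have := hoth β hβ0 hβ
        split_ifs <;> omega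
      · rw [Polynomial.rootMultiplicity_eq_zero hβ, if_neg (fun hh => hβ (by rw [hh]; exact hroot))]
        simp
  have h1 := Multiset.card_le_card hle
  have h2 := Polynomial.card_roots' γ
  simp only [Multiset.card_add, Multiset.card_nsmul, Multiset.card_singleton, hcard] at h1
  rw [hinf] at h2
  omega

lemma coeff_X_mul_pderiv' {K : Type*} [Field K] (i : Fin 2) (P : MvPolynomial (Fin 2) K) (m : Fin 2 →₀ ℕ) :
    coeff m (X i * pderiv i P) = (m i : K) * coeff m P := by
  induction P using MvPolynomial.induction_on' with
  | monomial n c =>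
    rw [X_mul_pderiv_monomial, coeff_smul, coeff_monomial]
    split_ifs with h
    · rw [h]; simp
    · simp
  | add p q hp hq => rw [map_add, mul_add, coeff_add, hp, hq, coeff_add, mul_add]

lemma fin2_eq (m : Fin 2 →₀ ℕ) : Finsupp.single 0 (m 0) + Finsupp.single 1 (m 1) = m := by
  ext i; fin_cases i <;> simp

lemma mem_Supp_of {K : Type*} [Field K] [CharZero K] (P : MvPolynomial (Fin 2) K) (m : Fin 2 →₀ ℕ)
    (h : coeff m P ≠ 0) : (m 0, m 1) ∈ Supp P := by
  simp only [Supp, Set.mem_setOf_eq, fin2_eq]; exact h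

lemma euler {K : Type*} [Field K] [CharZero K] (ρ σ d : ℤ) (P : MvPolynomial (Fin 2) K)
    (h : ∀ p ∈ Supp P, ρ * (p.1 : ℤ) + σ * (p.2 : ℤ) = d) :
    (ρ : MvPolynomial (Fin 2) K) * (X 0 * pderiv 0 P) + (σ : MvPolynomial (Fin 2) K) * (X 1 * pderiv 1 P)
      = (d : MvPolynomial (Fin 2) K) * P := by
  ext m
  have hc : ∀ z : ℤ, (z : MvPolynomial (Fin 2) K) = C (z : K) := fun z => by simp
  rw [hc, hc, hc, coeff_add, coeff_C_mul, coeff_C_mul, coeff_C_mul, coeff_X_mul_pderiv', coeff_X_mul_pderiv']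
  by_cases h0 : coeff m P = 0
  · simp [h0]
  · have := h _ (mem_Supp_of P m h0)
    rw [← this]; push_cast; ring

lemma pderiv_comm01 {K : Type*} [Field K] (P : MvPolynomial (Fin 2) K) :
    pderiv 0 (pderiv 1 P) = pderiv 1 (pderiv 0 P) := by
  have : ⁅(pderiv 0 : Derivation K (MvPolynomial (Fin 2) K) (MvPolynomial (Fin 2) K)), (pderiv 1 : Derivation K (MvPolynomial (Fin 2) K) (MvPolynomial (Fin 2) K))⁆ = 0 := by
    apply MvPolynomial.derivation_ext
    intro i
    rw [Derivation.commutator_apply]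
    fin_cases i <;> simp [pderiv_X, Pi.single_apply]
  have h2 := congrArg (fun D => D P) this
  simp only [Derivation.commutator_apply] at h2
  exact sub_eq_zero.1 h2

/-- bracket identities -/
lemma bracket_weight {K : Type*} [Field K] [CharZero K] (ρ σ v w : ℤ) (i : ℕ) (G R : MvPolynomial (Fin 2) K)
    (hR0 : R ≠ 0)
    (hR : ∀ p ∈ Supp R, ρ * (p.1 : ℤ) + σ * (p.2 : ℤ) = v)
    (hG : ∀ p ∈ Supp G, ρ * (p.1 : ℤ) + σ * (p.2 : ℤ) = w)
    (hJ : Jb G R = R ^ i) : w + v - ρ - σ = i * v := by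
  have eR := euler ρ σ v R hR
  have eG := euler ρ σ w G hG
  have hi : ∀ (j : Fin 2) (z : ℤ), pderiv j (z : MvPolynomial (Fin 2) K) = 0 := fun j z => by simp
  have e1 := congrArg (pderiv 0) eR
  have e2 := congrArg (pderiv 1) eR
  have e3 := congrArg (pderiv 0) eG
  have e4 := congrArg (pderiv 1) eG
  have x01 : pderiv 0 (X 1 : MvPolynomial (Fin 2) K) = 0 := pderiv_X_of_ne (by decide)
  have x10 : pderiv 1 (X 0 : MvPolynomial (Fin 2) K) = 0 := pderiv_X_of_ne (by decide)
  simp only [map_add, pderiv_mul, hi, pderiv_X_self, x01, x10, pderiv_comm01] at e1 e2 e3 e4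
  have e5 := congrArg (pderiv 0) hJ
  have e6 := congrArg (pderiv 1) hJ
  have hp : ∀ j : Fin 2, R * pderiv j (R ^ i) = i * R ^ i * pderiv j R := by
    intro j
    rcases i with _ | i
    · simp
    · rw [pderiv_pow]; simp; ring
  have p0 := hp 0
  have p1 := hp 1
  rw [← e5] at p0
  rw [← e6] at p1
  simp only [Jb, map_sub, pderiv_mul, pderiv_comm01] at p0 p1
  have key : ((w + v - ρ - σ - i * v : ℤ) : MvPolynomial (Fin 2) K) * (R * R ^ i) = 0 := by
    have hJ' : pderiv 0 G * pderiv 1 R - pderiv 0 R * pderiv 1 G = R ^ i := hJ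
    push_cast
    linear_combination (-(w + v - ρ - σ : MvPolynomial (Fin 2) K) * R) * hJ' + (ρ * X 0) * p0 + (σ * X 1) * p1
      + (i * R ^ i) * eR - R * (e3 * pderiv 1 R + e2 * pderiv 0 G - e1 * pderiv 1 G - e4 * pderiv 0 R)
  rcases mul_eq_zero.1 key with h | h
  · have : w + v - ρ - σ - i * v = 0 := by exact_mod_cast h
    linarith
  · exact absurd h (mul_ne_zero hR0 (pow_ne_zero _ hR0))

lemma bracket_id {K : Type*} [Field K] [CharZero K] (ρ σ v w : ℤ) (G R : MvPolynomial (Fin 2) K)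
    (hR : ∀ p ∈ Supp R, ρ * (p.1 : ℤ) + σ * (p.2 : ℤ) = v)
    (hG : ∀ p ∈ Supp G, ρ * (p.1 : ℤ) + σ * (p.2 : ℤ) = w) :
    (w : MvPolynomial (Fin 2) K) * G * pderiv 1 R - (v : MvPolynomial (Fin 2) K) * R * pderiv 1 G
      = (ρ : MvPolynomial (Fin 2) K) * X 0 * Jb G R := by
  have eR := euler ρ σ v R hR
  have eG := euler ρ σ w G hG
  simp only [Jb]
  linear_combination (-pderiv 1 R) * eG + (pderiv 1 G) * eR

/-- dehomogenization -/
def phi (K L : Type*) [Field K] [Field L] [Algebra K L] : MvPolynomial (Fin 2) K →+* Polynomial L :=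
  eval₂Hom (Polynomial.C.comp (algebraMap K L)) ![1, Polynomial.X]

lemma phi_pderiv {K L : Type*} [Field K] [Field L] [Algebra K L] (P : MvPolynomial (Fin 2) K) :
    phi K L (pderiv 1 P) = Polynomial.derivative (phi K L P) := by
  induction P using MvPolynomial.induction_on with
  | C a => simp [phi]
  | add p q hp hq => simp only [map_add, hp, hq]
  | mul_X p i hp =>
    rw [pderiv_mul, map_add, map_mul, map_mul, map_mul, Polynomial.derivative_mul, hp]
    fin_cases i
    · simp [phi]
    · simp [phi]

lemma phi_coeff {K L : Type*} [Field K] [Field L] [Algebra K L] (P : MvPolynomial (Fin 2) K) (j : ℕ) :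
    (phi K L P).coeff j = ∑ m ∈ P.support, if m 1 = j then algebraMap K L (coeff m P) else 0 := by
  simp only [phi, coe_eval₂Hom, eval₂_eq', Polynomial.finset_sum_coeff]
  refine Finset.sum_congr rfl fun m _ => ?_
  simp [Fin.prod_univ_two, Polynomial.coeff_X_pow, eq_comm]

lemma phi_coeff_ne {K L : Type*} [Field K] [CharZero K] [Field L] [Algebra K L] (P : MvPolynomial (Fin 2) K) (j : ℕ)
    (h : (phi K L P).coeff j ≠ 0) : ∃ i, (i, j) ∈ Supp P := by
  rw [phi_coeff] at h
  obtain ⟨m, hm, h1⟩ := Finset.exists_ne_zero_of_sum_ne_zero h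
  have h2 : m 1 = j := by by_contra h2; simp [h2] at h1
  exact ⟨m 0, h2 ▸ mem_Supp_of P m (mem_support_iff.1 hm)⟩

lemma phi_coeff_ne' {K L : Type*} [Field K] [CharZero K] [Field L] [Algebra K L] (P : MvPolynomial (Fin 2) K)
    (ρ σ : ℤ) (hρ : 0 < ρ) (hP : IsHomog ρ σ P) (p : ℕ × ℕ) (hp : p ∈ Supp P) :
    (phi K L P).coeff p.2 ≠ 0 := by
  rw [phi_coeff, Finset.sum_eq_single (Finsupp.single 0 p.1 + Finsupp.single 1 p.2)]
  · have : coeff (Finsupp.single 0 p.1 + Finsupp.single 1 p.2) P ≠ 0 := hp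
    simpa using this
  · intro m hm hne
    rw [if_neg]
    intro h2
    apply hne
    have := hP _ (mem_Supp_of P m (mem_support_iff.1 hm)) _ hp
    simp only [h2] at this
    have h3 : m 0 = p.1 := by
      have : ρ * (m 0 : ℤ) = ρ * p.1 := by linarith
      exact_mod_cast mul_left_cancel₀ hρ.ne' this
    rw [← h2, ← h3, fin2_eq]
  · intro h
    exact absurd (mem_support_iff.2 hp) h

lemma step {K : Type*} [Field K] [CharZero K] (ρ σ : ℤ) (hg : Int.gcd ρ σ = 1) (hρ : 0 < ρ) (hσ : ρ + σ < 0)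
    (R G : MvPolynomial (Fin 2) K) (c c' : ℕ × ℕ) (hR : IsHomog ρ σ R) (hGh : IsHomog ρ σ G)
    (hm : ¬ IsMonomial R) (hst : IsSt ρ σ R c) (hen : IsEn ρ σ R c') (hc : c.2 < c.1)
    (i : ℕ) (hi : 1 ≤ i) (hJ : Jb G R = R ^ i) :
    ∃ r t s : ℕ, 1 ≤ t ∧ 1 ≤ s ∧ c'.2 = c.2 + t * r ∧ (c'.1 : ℤ) - c'.2 = c.1 - c.2 + t * s ∧
      (r : ℤ) * (c.1 - c.2) - s * c.2 ≤ c'.1 - c'.2 := by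
  obtain ⟨⟨hcS, hcw⟩, hcmin⟩ := hst
  obtain ⟨⟨hc'S, hc'w⟩, hcmax⟩ := hen
  have hlead : ∀ p ∈ Supp R, p ∈ LeadSupp ρ σ R := fun p hp => ⟨hp, (hR p hp c hcS).trans hcw⟩
  replace hcmin : ∀ p ∈ Supp R, c.2 ≤ p.2 := fun p hp => hcmin p (hlead p hp)
  replace hcmax : ∀ p ∈ Supp R, p.2 ≤ c'.2 := fun p hp => hcmax p (hlead p hp)
  have hcop : IsCoprime ρ σ := Int.isCoprime_iff_gcd_eq_one.2 hg
  obtain ⟨r, rfl⟩ : ∃ r : ℕ, ρ = r := ⟨ρ.toNat, by omega⟩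
  obtain ⟨s, hs⟩ : ∃ s : ℕ, (s : ℤ) = - (r + σ) := ⟨(-(r+σ)).toNat, by omega⟩
  have hσs : σ = - r - s := by linarith
  have hs1 : 1 ≤ s := by omega
  have hr1 : 0 < r := by omega
  set v : ℤ := r * c.1 + σ * c.2 with hv
  have hRv : ∀ p ∈ Supp R, (r : ℤ) * (p.1 : ℤ) + σ * (p.2 : ℤ) = v := fun p hp => hR p hp c hcS
  -- structure of the support
  have hstr : ∀ p ∈ Supp R, ∃ k : ℕ, p.2 = c.2 + r * k ∧ (p.1 : ℤ) = c.1 - σ * k := by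
    intro p hp
    have h1 := hRv p hp
    have h2 : (r : ℤ) * ((p.1 : ℤ) - c.1) = σ * (c.2 - p.2) := by rw [hv] at h1; linarith
    have h3 : (r : ℤ) ∣ (c.2 : ℤ) - p.2 := hcop.dvd_of_dvd_mul_left (Dvd.intro _ h2)
    obtain ⟨e, he⟩ := h3
    have hle : (c.2 : ℤ) ≤ p.2 := by exact_mod_cast hcmin p hp
    have he0 : e ≤ 0 := by nlinarith
    refine ⟨(-e).toNat, ?_, ?_⟩
    · zify; rw [Int.toNat_of_nonneg (by omega)]; linarith
    · rw [Int.toNat_of_nonneg (by omega)]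
      rw [he] at h2
      have : (r : ℤ) * ((p.1 : ℤ) - c.1) = r * (σ * e) := by linarith
      have := mul_left_cancel₀ (by omega) this
      linarith
  obtain ⟨t, ht2, ht1⟩ := hstr c' hc'S
  have hlt : c.2 < c'.2 := by
    by_contra hcon
    apply hm
    intro p hp q hq
    have h1 := hcmin p hp
    have h2 := hcmin q hq
    have h3 := hcmax p hp
    have h4 := hcmax q hq
    have h5 : p.2 = q.2 := by omega
    have h6 := hR p hp q hq
    rw [h5] at h6
    have h7 : (r : ℤ) * (p.1 : ℤ) = r * q.1 := by linarith
    have := mul_left_cancel₀ (by omega) h7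
    exact Prod.ext (by exact_mod_cast this) h5
  have ht : 1 ≤ t := by
    rcases t with _ | t
    · simp at ht2; omega
    · omega
  refine ⟨r, t, s, ht, hs1, by rw [ht2, mul_comm], ?_, ?_⟩
  · rw [ht1, ht2, hσs]; push_cast; ring
  by_contra hcon
  push Not at hcon
  have hR0 : R ≠ 0 := by
    rintro rfl
    simp [Supp] at hcS
  have hG0 : G ≠ 0 := by
    rintro rfl
    have : (0 : MvPolynomial (Fin 2) K) = R ^ i := by rw [← hJ]; simp [Jb]
    exact pow_ne_zero _ hR0 this.symm
  obtain ⟨m, hmm⟩ := ne_zero_iff.1 hG0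
  set q : ℕ × ℕ := (m 0, m 1)
  have hq : q ∈ Supp G := mem_Supp_of G m hmm
  set w : ℤ := r * q.1 + σ * q.2 with hw
  have hGw : ∀ p ∈ Supp G, (r : ℤ) * (p.1 : ℤ) + σ * (p.2 : ℤ) = w := fun p hp => hGh p hp q hq
  have hwt := bracket_weight _ _ _ _ i G R hR0 hRv hGw hJ
  obtain ⟨h, rfl⟩ : ∃ h, i = h + 1 := ⟨i - 1, by omega⟩
  have hid := bracket_id _ _ _ _ G R hRv hGw
  rw [hJ] at hid
  have hw2 : w = h * v - s := by push_cast at hwt; linarith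
  let L := AlgebraicClosure K
  haveI : CharZero L := charZero_of_injective_algebraMap (algebraMap K L).injective
  have hid2 := congrArg (phi K L) hid
  simp only [map_sub, map_mul, map_pow, phi_pderiv, map_intCast] at hid2
  have hX0 : phi K L (X 0) = 1 := by simp [phi]
  rw [hX0, mul_one, hw2] at hid2
  have hcb := phi_coeff_ne' (L := L) R r σ hρ hR c hcS
  have hcb' := phi_coeff_ne' (L := L) R r σ hρ hR c' hc'S
  refine core (phi K L R) (phi K L G) v s (c.1 - c.2) r c.2 t h hr1 (by omega) (by omega) ht ?_ ?_ ?_ ?_ ?_ ?_ ?_ ?_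
  · rw [hv, hσs]; ring
  · have : (c'.1 : ℤ) - c'.2 = c.1 - c.2 + t * s := by rw [ht1, ht2, hσs]; push_cast; ring
    have h2 : v = r * (c.1 - c.2) - s * c.2 := by rw [hv, hσs]; ring
    linarith
  · intro h0
    exact phi_coeff_ne' (L := L) G r σ hρ hGh q hq (by rw [h0]; simp)
  · have : c.2 + t * r = c'.2 := by rw [ht2, mul_comm]
    rw [this]
    apply Polynomial.natDegree_eq_of_le_of_coeff_ne_zero _ hcb'
    rw [Polynomial.natDegree_le_iff_coeff_eq_zero]
    intro n hn
    by_contra hne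
    obtain ⟨i, hi⟩ := phi_coeff_ne R n hne
    have := hcmax _ hi
    simp at this
    omega
  · rw [Polynomial.rootMultiplicity_eq_natTrailingDegree']
    apply le_antisymm
    · exact Polynomial.natTrailingDegree_le_of_ne_zero hcb
    · have hne : (phi K L R).coeff (phi K L R).natTrailingDegree ≠ 0 :=
        Polynomial.trailingCoeff_nonzero_iff_nonzero.2 (by intro h0; rw [h0] at hcb; simp at hcb)
      obtain ⟨i, hi⟩ := phi_coeff_ne R _ hne
      exact hcmin _ hi
  · intro j hj
    obtain ⟨i, hi⟩ := phi_coeff_ne R j hj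
    obtain ⟨k, hk, -⟩ := hstr _ hi
    refine ⟨k, ?_, hk⟩
    have h1 := hcmax _ hi
    rw [hk, ht2] at h1
    exact Nat.le_of_mul_le_mul_left (by omega) hr1
  · intro j hj
    obtain ⟨i, hi⟩ := phi_coeff_ne G j hj
    have h1 := hGw _ hi
    rw [hw2] at h1
    simp only at h1
    have h2 : (r : ℤ) * ((i : ℤ) - h * c.1 - 1) = σ * (1 + h * c.2 - j) := by
      rw [hv] at h1
      linear_combination h1 - hs
    obtain ⟨e, he⟩ := hcop.dvd_of_dvd_mul_left (Dvd.intro _ h2)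
    exact ⟨-e, by linarith⟩
  · have hC : ∀ z : ℤ, (z : Polynomial L) = Polynomial.C (z : L) := fun z => (map_intCast (Polynomial.C : L →+* Polynomial L) z).symm
    rw [hC, hC, hC, Int.cast_natCast (R := L) r] at hid2
    exact hid2

/-- bound -/
def Fb : ℕ → ℕ
  | 0 => 0
  | n + 1 => Fb n + (n + 1) * ((n + 1) + (n + 1) * Fb n)

lemma Fb_mono : Monotone Fb := monotone_nat_of_le_succ fun n => by rw [Fb]; omega

lemma chain_bound {K : Type*} [Field K] [CharZero K] {k : ℕ} (ch : AdmChain K k) :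
    ∀ j, j ≤ k → (ch.C j).2 < (ch.C j).1 ∧ (ch.C j).2 ≤ Fb ((ch.C j).1 - (ch.C j).2) := by
  intro j
  induction j with
  | zero =>
    intro _
    obtain ⟨l, hl, h⟩ := ch.hC0
    rw [h]; simp; omega
  | succ j ih =>
    intro hj
    obtain ⟨h1, h2⟩ := ih (by omega)
    obtain ⟨G, i, hi, hGh, hJ⟩ := ch.hG (j+1) (by omega) hj
    obtain ⟨hg, hρ, hσ⟩ := ch.hdir (j+1) (by omega) hj
    obtain ⟨r, t, s, ht, hs, e1, e2, e3⟩ := step _ _ hg hρ hσ _ G _ _ (ch.hhom (j+1) (by omega) hj) hGh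
      (ch.hmono _ (by omega) hj) (ch.hst (j+1) (by omega) hj) (ch.hen (j+1) (by omega) hj) h1 i hi hJ
    have h3 := ch.hdiag (j+1) (by omega) hj
    refine ⟨h3, ?_⟩
    simp only [Nat.add_sub_cancel] at e1 e2 e3
    set a := (ch.C j).1
    set b := (ch.C j).2
    set a' := (ch.C (j+1)).1
    set b' := (ch.C (j+1)).2
    obtain ⟨D, hD⟩ : ∃ D, a = b + D := ⟨a - b, by omega⟩
    obtain ⟨D', hD'⟩ : ∃ D', a' = b' + (D' + 1) := ⟨a' - b' - 1, by omega⟩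
    have hDs : a - b = D := by omega
    have hDs' : a' - b' = D' + 1 := by omega
    rw [hDs] at h2
    rw [hDs', Fb]
    have hD1 : 1 ≤ D := by omega
    rw [hD, hD'] at e2 e3
    push_cast at e2 e3
    have e2' : D' + 1 = D + t * s := by zify; linarith
    have e3' : r * D ≤ D' + 1 + s * b := by zify; linarith
    have hts1 : t ≤ t * s := Nat.le_mul_of_pos_right _ hs
    have hts2 : s ≤ t * s := Nat.le_mul_of_pos_left _ ht
    have hb : b ≤ Fb D' := h2.trans (Fb_mono (by omega))
    have hr : r ≤ (D' + 1) + (D' + 1) * Fb D' := by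
      calc r ≤ r * D := Nat.le_mul_of_pos_right _ hD1
        _ ≤ _ := e3'
        _ ≤ _ := Nat.add_le_add_left (Nat.mul_le_mul (by omega) hb) _
    rw [e1]
    exact Nat.add_le_add hb (Nat.mul_le_mul (by omega) hr)

/-- For every `g ≥ 1` there are only finitely many possible `A₀′` with
`a' − b' = g`. -/
theorem stmt15 (K : Type*) [Field K] [CharZero K] (g : ℕ) (hg : 1 ≤ g) :
    {p : ℕ × ℕ | (p.1 : ℤ) - (p.2 : ℤ) = g ∧ PossibleA0 K p}.Finite := by
  refine Set.Finite.subset ((Set.finite_Iic (g + Fb g)).prod (Set.finite_Iic (Fb g))) ?_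
  rintro p ⟨hp, k, ch, rfl⟩
  obtain ⟨h1, h2⟩ := chain_bound ch k le_rfl
  have h3 : (ch.C k).1 - (ch.C k).2 = g := by omega
  rw [h3] at h2
  exact ⟨by simp only [Set.mem_Iic]; omega, h2⟩

end
end

section
/- For all integers ℘ ≥ 1 and n′ ≥ 2, the point (℘·n′, ℘·(n′−1)) is not a possible A0′; that is, no admissible chain has end point (℘n′, ℘(n′−1)). -/
open MvPolynomial

noncomputable section

variable {K : Type*} [Field K] [CharZero K]

namespace Polynomial



variable {L : Type*} [Field L] [CharZero L]

/-- Local analysis of the differential equation at a point `α`. -/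
lemma local_aux (f g : L[X]) (hf : f ≠ 0) (hg : g ≠ 0) (α w v r : L) (i : ℕ)
    (h : C w * (g * derivative f) - C v * (f * derivative g) = C r * f ^ i)
    (hne : w * (f.rootMultiplicity α : L) ≠ v * (g.rootMultiplicity α : L)) :
    i * f.rootMultiplicity α + 1 ≤ f.rootMultiplicity α + g.rootMultiplicity α := by
  obtain ⟨f1, hf1, hf1'⟩ := exists_eq_pow_rootMultiplicity_mul_and_not_dvd f hf α
  obtain ⟨g1, hg1, hg1'⟩ := exists_eq_pow_rootMultiplicity_mul_and_not_dvd g hg α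
  set m := f.rootMultiplicity α with hm
  set n := g.rootMultiplicity α with hn
  have key : ∀ (k : ℕ) (p : L[X]), (X - C α) * derivative ((X - C α) ^ k * p) =
      (X - C α) ^ k * (C (k : L) * p + (X - C α) * derivative p) := by
    intro k p
    rcases k with _ | k
    · simp
    · simp only [derivative_mul, derivative_X_sub_C_pow, Nat.add_sub_cancel, map_natCast]
      ring
  by_contra hlt
  push Not at hlt
  obtain ⟨d, hd⟩ := Nat.exists_eq_add_of_lt hlt
  have hxf := key m f1
  have hxg := key n g1
  rw [← hf1] at hxf
  rw [← hg1] at hxg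
  have h2 : (X - C α) ^ (m + n) * (C w * g1 * (C (m : L) * f1 + (X - C α) * derivative f1)
      - C v * f1 * (C (n : L) * g1 + (X - C α) * derivative g1))
      = (X - C α) ^ (m + n) * ((X - C α) ^ (d + 1) * (C r * f1 ^ i)) := by
    have e1 : (X - C α) * (C r * f ^ i) =
        (X - C α) ^ (m + n) * ((X - C α) ^ (d + 1) * (C r * f1 ^ i)) := by
      have : (X - C α) * (C r * f ^ i) = (X - C α) ^ (i * m + 1) * (C r * f1 ^ i) := by
        conv_lhs => rw [hf1]
        rw [mul_pow, ← pow_mul, mul_comm m i]; ring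
      rw [this, hd]; ring
    rw [← e1, ← h]
    have : (X - C α) * (C w * (g * derivative f) - C v * (f * derivative g)) =
      C w * g * ((X - C α) * derivative f) - C v * f * ((X - C α) * derivative g) := by ring
    rw [this, hxf, hxg]
    conv_rhs => rw [hf1, hg1]
    rw [pow_add]
    ring
  have h3 := mul_left_cancel₀ (pow_ne_zero _ (X_sub_C_ne_zero α)) h2
  have h4 := congrArg (eval α) h3
  rw [dvd_iff_isRoot, IsRoot.def] at hf1' hg1'
  simp at h4
  have : (w * m - v * n) * (eval α f1 * eval α g1) = 0 := by linear_combination h4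
  rcases mul_eq_zero.1 this with h5 | h5
  · exact hne (sub_eq_zero.1 h5)
  · exact mul_ne_zero hf1' hg1' h5

/-- Analysis at infinity. -/
lemma deg_aux (f g : L[X]) (hf : f ≠ 0) (hg : g ≠ 0) (w v r : L) (i : ℕ)
    (h : C w * (g * derivative f) - C v * (f * derivative g) = C r * f ^ i)
    (hne : w * (f.natDegree : L) ≠ v * (g.natDegree : L)) :
    f.natDegree + g.natDegree ≤ i * f.natDegree + 1 := by
  by_contra hlt
  push Not at hlt
  have key : ∀ p : L[X], (X * derivative p).natDegree ≤ p.natDegree ∧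
      (X * derivative p).coeff p.natDegree = p.natDegree * p.leadingCoeff := by
    intro p
    have hc : ∀ n, (X * derivative p).coeff n = n * p.coeff n := by
      intro n
      rcases n with _ | n
      · simp
      · rw [coeff_X_mul, coeff_derivative]; push_cast; ring
    refine ⟨?_, hc _⟩
    rw [natDegree_le_iff_coeff_eq_zero]
    intro N hN
    rw [hc, coeff_eq_zero_of_natDegree_lt hN, mul_zero]
  have h2 : C w * (g * (X * derivative f)) - C v * (f * (X * derivative g)) =
      C r * (X * f ^ i) := by linear_combination X * h
  have h3 := congrArg (fun p => coeff p (f.natDegree + g.natDegree)) h2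
  simp only [coeff_sub, coeff_C_mul] at h3
  rw [coeff_mul_add_eq_of_natDegree_le le_rfl (key g).1, (key g).2,
    add_comm f.natDegree, coeff_mul_add_eq_of_natDegree_le le_rfl (key f).1, (key f).2,
    coeff_eq_zero_of_natDegree_lt (n := g.natDegree + f.natDegree)] at h3
  · have : (w * f.natDegree - v * g.natDegree) * (f.leadingCoeff * g.leadingCoeff) = 0 := by
      simp only [leadingCoeff] at h3 ⊢
      linear_combination h3
    rcases mul_eq_zero.1 this with h5 | h5
    · exact hne (sub_eq_zero.1 h5)
    · exact mul_ne_zero (leadingCoeff_ne_zero.2 hf) (leadingCoeff_ne_zero.2 hg) h5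
  · refine lt_of_le_of_lt (natDegree_mul_le) ?_
    rw [natDegree_X, natDegree_pow]
    omega

/-- Roots of `X^s φ(X^ρ)` away from `0` have small multiplicity. -/
lemma mult_aux (f : L[X]) (hf : f ≠ 0) (s ρ : ℕ) (hρ : 0 < ρ)
    (hs : ∀ j, f.coeff j ≠ 0 → s ≤ j ∧ ρ ∣ j - s) (α : L) (hα : α ≠ 0) :
    ρ * f.rootMultiplicity α ≤ f.natDegree := by
  have hX : X ^ s ∣ f := by
    rw [X_pow_dvd_iff]
    intro d hd
    by_contra h
    exact absurd (hs d h).1 (by omega)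
  obtain ⟨f1, rfl⟩ := hX
  have h1 : f1 = expand L ρ (contract ρ f1) := by
    ext n
    rw [coeff_expand hρ]
    split_ifs with h
    · rw [coeff_contract hρ.ne', Nat.div_mul_cancel h]
    · by_contra hc
      have := (hs (n + s) (by rwa [coeff_X_pow_mul])).2
      rw [Nat.add_sub_cancel] at this
      exact h this
  set φ := contract ρ f1
  have hf1 : f1 ≠ 0 := right_ne_zero_of_mul hf
  have hφ : φ ≠ 0 := by
    intro h; rw [h] at h1; exact hf1 (by simpa using h1)
  obtain ⟨φ1, e, hφ1⟩ := exists_eq_pow_rootMultiplicity_mul_and_not_dvd φ hφ (α ^ ρ)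
  set m := φ.rootMultiplicity (α ^ ρ)
  have hm : m ≤ φ.natDegree := by
    have := congrArg natDegree e
    have h0 : φ1 ≠ 0 := by rintro rfl; simp at hφ1
    rw [natDegree_mul (pow_ne_zero _ (X_sub_C_ne_zero _)) h0, natDegree_pow,
      natDegree_X_sub_C] at this
    omega
  have hd : f1.natDegree = φ.natDegree * ρ := by
    conv_lhs => rw [h1]
    rw [natDegree_expand]
  have e2 : X ^ s * f1 = (X ^ ρ - C (α ^ ρ)) ^ m * (X ^ s * expand L ρ φ1) := by
    conv_lhs => rw [h1, e]
    simp
    ring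
  have hq : (X ^ s * expand L ρ φ1).rootMultiplicity α = 0 := by
    apply rootMultiplicity_eq_zero
    rw [dvd_iff_isRoot] at hφ1
    simpa [expand_eval, hα] using hφ1
  have hp0 : (X ^ ρ - C (α ^ ρ) : L[X]) ≠ 0 := X_pow_sub_C_ne_zero hρ _
  have hp : (X ^ ρ - C (α ^ ρ) : L[X]).rootMultiplicity α ≤ 1 := by
    by_contra h
    push Not at h
    rw [one_lt_rootMultiplicity_iff_isRoot hp0] at h
    have := h.2
    rw [derivative_sub, derivative_C, derivative_X_pow] at this
    simp [hα, hρ.ne'] at this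
  have hmult : (X ^ s * f1).rootMultiplicity α ≤ m := by
    rw [e2] at hf ⊢
    rw [rootMultiplicity_mul hf, hq]
    have : ((X ^ ρ - C (α ^ ρ) : L[X]) ^ m).rootMultiplicity α =
        m * (X ^ ρ - C (α ^ ρ) : L[X]).rootMultiplicity α := by
      classical
      rw [← count_roots, roots_pow, Multiset.count_nsmul, count_roots]
    rw [this]
    nlinarith
  rw [natDegree_mul (pow_ne_zero _ X_ne_zero) hf1, hd]
  calc ρ * _ ≤ ρ * φ.natDegree := Nat.mul_le_mul_left _ (hmult.trans hm)
    _ ≤ _ := by rw [mul_comm]; omega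

/-- The one-variable core of the argument. -/
lemma core [IsAlgClosed L] (f g : L[X]) (hf : f ≠ 0) (hg : g ≠ 0) (ρ s B i : ℕ) (ε v P : ℤ)
    (hi : 1 ≤ i) (hρ : 0 < ρ) (hε : 0 < ε) (hvP : P ≤ v) (hP : 0 < P) (hB : 0 < B)
    (hv : v = ρ * P - ε * B)
    (h : C ((((i : ℤ) - 1) * v - ε : ℤ) : L) * (g * derivative f)
      - C (v : L) * (f * derivative g) = C (ρ : L) * f ^ i)
    (hs : ∀ j, f.coeff j ≠ 0 → s ≤ j ∧ ρ ∣ j - s) (hsB : s < B) (hfs : f.coeff s ≠ 0)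
    (hdeg : f.natDegree = B)
    (hgs : ∀ j, g.coeff j ≠ 0 → (ρ : ℤ) ∣ ((i : ℤ) - 1) * s - j + 1) : False := by
  obtain ⟨i, rfl⟩ : ∃ i', i = i' + 1 := ⟨i - 1, by omega⟩
  push_cast at hgs
  simp only [add_sub_cancel_right] at hgs
  have hv0 : 0 < v := by omega
  have hB' : (0 : ℤ) < B := by exact_mod_cast hB
  have hρ2 : 2 ≤ ρ := by
    by_contra hlt
    have : ρ = 1 := by omega
    subst this
    have := mul_pos hε hB'
    push_cast at hv
    linarith
  have hs0 : f.rootMultiplicity 0 = s := by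
    rw [rootMultiplicity_eq_natTrailingDegree']
    exact le_antisymm (natTrailingDegree_le_of_ne_zero hfs)
      (hs _ (by rw [← trailingCoeff]; exact trailingCoeff_nonzero_iff_nonzero.2 hf)).1
  -- every root is regular
  have hreg : ∀ α, 1 ≤ f.rootMultiplicity α →
      i * f.rootMultiplicity α + 1 ≤ g.rootMultiplicity α := by
    intro α hα
    by_contra hlt
    push Not at hlt
    set m := f.rootMultiplicity α with hm
    set n := g.rootMultiplicity α with hn
    have hEq : ((i : ℤ) * v - ε) * m = v * n := by
      by_contra hne
      have := local_aux f g hf hg α _ _ _ _ h (by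
        rw [← hm, ← hn]; intro hh; apply hne; push_cast at hh; 
        have : ((((i : ℤ) * v - ε) * m : ℤ) : L) = ((v * n : ℤ) : L) := by
          push_cast; linear_combination hh
        exact_mod_cast this)
      rw [← hm, ← hn] at this
      nlinarith
    have hk : ε * m = v * (i * m - n) := by linear_combination -hEq
    have hm' : (1 : ℤ) ≤ m := by exact_mod_cast hα
    have hk0 : (1 : ℤ) ≤ i * m - n := by
      by_contra hc
      have : (i * m - n : ℤ) ≤ 0 := by omega
      nlinarith [mul_pos hε (show (0 : ℤ) < m by omega)]
    by_cases hα0 : α = 0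
    · subst hα0
      rw [hs0] at hm
      have hd := hgs n (by
        rw [hn, rootMultiplicity_eq_natTrailingDegree', ← trailingCoeff]
        exact trailingCoeff_nonzero_iff_nonzero.2 hg)
      rw [hm] at hk hk0
      have hle := Int.le_of_dvd (by omega) hd
      have h1 : v * (ρ - 1) ≤ ε * s := by rw [hk]; exact mul_le_mul_of_nonneg_left (by omega) hv0.le
      have h2 : ε * s < ε * B := by
        apply mul_lt_mul_of_pos_left _ hε
        exact_mod_cast hsB
      have h3 : (ρ : ℤ) * P ≤ ρ * v := mul_le_mul_of_nonneg_left hvP (by positivity)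
      nlinarith
    · have hmb := mult_aux f hf s ρ hρ hs α hα0
      rw [hdeg, ← hm] at hmb
      have hmb' : (ρ : ℤ) * m ≤ B := by exact_mod_cast hmb
      have h1 : v ≤ ε * m := by rw [hk]; nlinarith
      have h2 : ε * (ρ * m) ≤ ε * B := mul_le_mul_of_nonneg_left hmb' hε.le
      have h3 : (ρ : ℤ) * P ≤ ρ * v := mul_le_mul_of_nonneg_left hvP (by positivity)
      have h4 : (ρ : ℤ) * v ≤ ρ * (ε * m) := mul_le_mul_of_nonneg_left h1 (by positivity)
      nlinarith
  classical
  have hms : i • f.roots + f.roots.dedup ≤ g.roots := by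
    rw [Multiset.le_iff_count]
    intro α
    rw [Multiset.count_add, Multiset.count_nsmul, Multiset.count_dedup, count_roots, count_roots]
    by_cases h0 : 1 ≤ f.rootMultiplicity α
    · have := hreg α h0
      split_ifs <;> omega
    · have h1 : f.rootMultiplicity α = 0 := by omega
      have : α ∉ f.roots := by
        rw [← Multiset.count_eq_zero, count_roots, h1]
      simp [this, h1]
  have hcard : Multiset.card f.roots = B := by
    rw [← hdeg]; exact (IsAlgClosed.splits f).natDegree_eq_card_roots.symm
  have hc := Multiset.card_le_card hms
  rw [Multiset.card_add, Multiset.card_nsmul, hcard] at hc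
  have hc2 := hc.trans (card_roots' g)

  have hD := deg_aux f g hf hg _ _ _ _ h (by
    rw [hdeg]
    intro hh
    have hh' : (((i : ℤ) * v - ε) * B : ℤ) = v * g.natDegree := by
      have : ((((i : ℤ) * v - ε) * B : ℤ) : L) = ((v * g.natDegree : ℤ) : L) := by
        push_cast at hh ⊢; linear_combination hh
      exact_mod_cast this
    have : (i * B : ℤ) ≤ g.natDegree := by exact_mod_cast (show i * B ≤ g.natDegree by omega)
    nlinarith [mul_pos hε hB', mul_le_mul_of_nonneg_left this hv0.le])
  rw [hdeg] at hD
  have hone : Multiset.card f.roots.dedup ≤ 1 := by nlinarith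
  obtain ⟨α, hα⟩ : ∃ α, α ∈ f.roots := Multiset.card_pos_iff_exists_mem.1 (by omega)
  have hall : ∀ β ∈ f.roots, β = α := by
    intro β hβ
    have : f.roots.toFinset.card ≤ 1 := hone
    exact Finset.card_le_one.1 this β (by simpa using hβ) α (by simpa using hα)
  have hmB : f.rootMultiplicity α = B := by
    rw [← count_roots, ← hcard, Multiset.count_eq_card]
    intro x hx; exact (hall x hx).symm
  by_cases hα0 : α = 0
  · subst hα0; omega
  · have := mult_aux f hf s ρ hρ hs α hα0
    rw [hmB, hdeg] at this
    nlinarith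

end Polynomial

/-- Setting `x = 1`. -/
def ev (L : Type*) [Field L] [Algebra K L] :
    MvPolynomial (Fin 2) K →ₐ[K] Polynomial L :=
  aeval ![1, Polynomial.X]

lemma ev_monomial (L : Type*) [Field L] [Algebra K L] (d : Fin 2 →₀ ℕ) (c : K) :
    ev L (monomial d c) = Polynomial.monomial (d 1) (algebraMap K L c) := by
  rw [ev, aeval_monomial, Finsupp.prod_fintype _ _ (by simp)]
  simp [← Polynomial.C_mul_X_pow_eq_monomial, Polynomial.algebraMap_apply]

lemma ev_pderiv_one (L : Type*) [Field L] [Algebra K L] (P : MvPolynomial (Fin 2) K) :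
    ev L (pderiv 1 P) = Polynomial.derivative (ev L P) := by
  induction P using MvPolynomial.induction_on' with
  | monomial d c =>
    rw [pderiv_monomial, ev_monomial, ev_monomial, Polynomial.derivative_monomial]
    simp
  | add p q hp hq => simp [hp, hq]

lemma pair_eq (d : Fin 2 →₀ ℕ) : Finsupp.single 0 (d 0) + Finsupp.single 1 (d 1) = d := by
  ext i; fin_cases i <;> simp

lemma ev_euler (L : Type*) [Field L] [Algebra K L] (P : MvPolynomial (Fin 2) K) (ρ σ v : ℤ)
    (h : ∀ d, coeff d P ≠ 0 → ρ * (d 0 : ℤ) + σ * (d 1 : ℤ) = v) :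
    Polynomial.C (ρ : L) * ev L (pderiv 0 P) + Polynomial.C (σ : L) * (Polynomial.X * ev L (pderiv 1 P))
      = Polynomial.C (v : L) * ev L P := by
  have key : ∀ d ∈ P.support, Polynomial.C (ρ : L) * ev L (pderiv 0 (monomial d (coeff d P)))
      + Polynomial.C (σ : L) * (Polynomial.X * ev L (pderiv 1 (monomial d (coeff d P))))
      = Polynomial.C (v : L) * ev L (monomial d (coeff d P)) := by
    intro d hd
    have hv := h d (mem_support_iff.1 hd)
    rw [pderiv_monomial, pderiv_monomial, ev_monomial, ev_monomial, ev_monomial, ← hv]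
    rcases hd1 : d 1 with _ | k
    · simp [hd1, Polynomial.C_mul_monomial]
      ring_nf
    · simp [hd1, ← Polynomial.C_mul_X_pow_eq_monomial]
      ring
  have hP := P.as_sum
  conv_lhs => rw [hP]
  conv_rhs => rw [hP]
  simp only [map_sum, Finset.mul_sum]
  rw [← Finset.sum_add_distrib]
  exact Finset.sum_congr rfl key

lemma ev_coeff_ne (L : Type*) [Field L] [Algebra K L] (P : MvPolynomial (Fin 2) K) (j : ℕ)
    (h : (ev L P).coeff j ≠ 0) : ∃ a, (a, j) ∈ Supp P := by
  rw [P.as_sum, map_sum, Polynomial.finsetSum_coeff] at h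
  obtain ⟨d, hd, hne⟩ := Finset.exists_ne_zero_of_sum_ne_zero h
  rw [ev_monomial, Polynomial.coeff_monomial] at hne
  split_ifs at hne with hj
  · refine ⟨d 0, ?_⟩
    subst hj
    simpa [Supp, pair_eq] using hd
  · exact absurd rfl hne

lemma ev_coeff (L : Type*) [Field L] [Algebra K L] (P : MvPolynomial (Fin 2) K) (ρ σ : ℤ)
    (hρ : 0 < ρ) (hP : IsHomog ρ σ P) (a j : ℕ) (h : (a, j) ∈ Supp P) :
    (ev L P).coeff j ≠ 0 := by
  have : (ev L P).coeff j =
      algebraMap K L (coeff (Finsupp.single 0 a + Finsupp.single 1 j) P) := by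
    conv_lhs => rw [P.as_sum]
    rw [map_sum, Polynomial.finsetSum_coeff,
      Finset.sum_eq_single (Finsupp.single 0 a + Finsupp.single 1 j)]
    · rw [ev_monomial, Polynomial.coeff_monomial]; simp
    · intro d hd hne
      rw [ev_monomial, Polynomial.coeff_monomial, if_neg]
      intro hj
      apply hne
      have hd' : (d 0, d 1) ∈ Supp P := by simpa [Supp, pair_eq] using hd
      have := hP _ hd' _ h
      simp only [hj] at this
      have h0 : d 0 = a := by
        have h1 : ρ * (d 0 : ℤ) = ρ * a := by linarith
        exact_mod_cast mul_left_cancel₀ hρ.ne' h1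
      rw [← pair_eq d, h0, hj]
    · intro hns
      rw [ev_monomial, notMem_support_iff.1 hns]; simp
  rw [this]
  simpa [Supp] using h

lemma homog_weighted (P : MvPolynomial (Fin 2) K) (ρ σ : ℤ) (hP : IsHomog ρ σ P)
    (p : ℕ × ℕ) (hp : p ∈ Supp P) (d : Fin 2 →₀ ℕ) (hd : coeff d P ≠ 0) :
    ρ * (d 0 : ℤ) + σ * (d 1 : ℤ) = ρ * (p.1 : ℤ) + σ * (p.2 : ℤ) :=
  hP (d 0, d 1) (by simpa [Supp, pair_eq] using hd) p hp

lemma weighted_iff (P : MvPolynomial (Fin 2) K) (ρ σ v : ℤ) :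
    IsWeightedHomogeneous ![ρ, σ] P v ↔
      ∀ d, coeff d P ≠ 0 → ρ * (d 0 : ℤ) + σ * (d 1 : ℤ) = v := by
  have : ∀ d : Fin 2 →₀ ℕ, Finsupp.weight ![ρ, σ] d = ρ * (d 0 : ℤ) + σ * (d 1 : ℤ) := by
    intro d
    rw [Finsupp.weight_apply, Finsupp.sum_fintype _ _ (by simp)]
    simp [mul_comm]
  simp only [IsWeightedHomogeneous, this]

/-- Proposition "casos imposibles": for `℘ ≥ 1` and `n' ≥ 2`, the point
`(℘n', ℘(n'−1))` is not a possible `A₀′`. -/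
theorem stmt16 (K : Type*) [Field K] [CharZero K]
    (wp n' : ℕ) (hwp : 1 ≤ wp) (hn' : 2 ≤ n') :
    ¬ PossibleA0 K (wp * n', wp * (n' - 1)) := by
  rintro ⟨k, ch, hC⟩
  obtain ⟨N, rfl⟩ : ∃ N, n' = N + 1 := ⟨n' - 1, by omega⟩
  rw [Nat.add_sub_cancel] at hC
  have hN : 1 ≤ N := by omega
  have hB : 0 < wp * N := Nat.mul_pos hwp hN
  have hk : 1 ≤ k := by
    by_contra h
    have hk0 : k = 0 := by omega
    subst hk0
    obtain ⟨l, -, hl⟩ := ch.hC0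
    rw [hl] at hC
    have := congrArg Prod.snd hC
    simp only at this
    omega
  obtain ⟨hgcd, hρ, hρσ⟩ := ch.hdir k hk le_rfl
  have hhom := ch.hhom k hk le_rfl
  have hmono := ch.hmono k hk le_rfl
  have hst := ch.hst k hk le_rfl
  have hen := ch.hen k hk le_rfl
  have hval := ch.hval k hk le_rfl
  obtain ⟨G, i, hi, hGh, hJ⟩ := ch.hG k hk le_rfl
  rw [hC] at hen hval
  generalize ch.Rp k = R at *
  generalize ch.C (k - 1) = Q at *
  generalize (ch.dir k).2 = σ at *
  generalize (ch.dir k).1 = ρ' at *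
  clear hC ch hk
  obtain ⟨Qa, s⟩ := Q
  obtain ⟨ρ, rfl⟩ := Int.eq_ofNat_of_zero_le hρ.le
  have hρn : 0 < ρ := by exact_mod_cast hρ
  simp only at hval
  have hlead : ∀ q ∈ Supp R, q ∈ LeadSupp (ρ : ℤ) σ R := by
    intro q hq
    exact ⟨hq, (hhom q hq _ hen.1.1).trans hen.1.2⟩
  have hwt := homog_weighted R _ _ hhom _ hen.1.1
  set v : ℤ := (ρ : ℤ) * ((wp * (N + 1) : ℕ) : ℤ) + σ * ((wp * N : ℕ) : ℤ) with hvdef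
  have hR0 : R ≠ 0 := by
    rintro rfl
    have := hen.1.1
    simp [Supp] at this
  have hG0 : G ≠ 0 := by
    rintro rfl
    simp only [Jb, map_zero, zero_mul, mul_zero, sub_zero] at hJ
    exact pow_ne_zero _ hR0 hJ.symm
  obtain ⟨d0, hd0⟩ := exists_coeff_ne_zero hG0
  have hd0' : (d0 0, d0 1) ∈ Supp G := by simpa [Supp, pair_eq] using hd0
  have hwG := homog_weighted G _ _ hGh _ hd0'
  set w : ℤ := (ρ : ℤ) * (d0 0 : ℤ) + σ * (d0 1 : ℤ) with hwdef
  have hwR' := (weighted_iff R ρ σ v).2 hwt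
  have hwG' := (weighted_iff G ρ σ w).2 hwG
  have hw : w = ((i : ℤ) - 1) * v + (ρ + σ) := by
    have h1 : IsWeightedHomogeneous ![(ρ : ℤ), σ] (Jb G R) (w + v - (ρ + σ)) := by
      have a1 := (hwG'.pderiv (i := 0) (n' := w - ρ) (by simp)).mul
        (hwR'.pderiv (i := 1) (n' := v - σ) (by simp))
      have a2 := (hwR'.pderiv (i := 0) (n' := v - ρ) (by simp)).mul
        (hwG'.pderiv (i := 1) (n' := w - σ) (by simp))
      rw [show w - ρ + (v - σ) = w + v - (ρ + σ) by ring] at a1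
      rw [show v - ρ + (w - σ) = w + v - (ρ + σ) by ring] at a2
      exact (weightedHomogeneousSubmodule K ![(ρ : ℤ), σ] _).sub_mem a1 a2
    rw [hJ] at h1
    have h2 := IsWeightedHomogeneous.inj_right (pow_ne_zero _ hR0) h1 (hwR'.pow i)
    rw [nsmul_eq_mul] at h2
    linarith
  let L := AlgebraicClosure K
  have : CharZero L := charZero_of_injective_algebraMap (algebraMap K L).injective
  have hsmem := ev_coeff L R ρ σ hρ hhom _ _ hst.1.1
  have hBmem := ev_coeff L R ρ σ hρ hhom _ _ hen.1.1
  have hGmem := ev_coeff L G ρ σ hρ hGh _ _ hd0'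
  have hle : ∀ j, (ev L R).coeff j ≠ 0 → j ≤ wp * N := by
    intro j hj
    obtain ⟨a, ha⟩ := ev_coeff_ne L R j hj
    exact hen.2 _ (hlead _ ha)
  have hcop : IsCoprime (ρ : ℤ) σ := Int.isCoprime_iff_gcd_eq_one.2 hgcd
  have hsR : (ρ : ℤ) * Qa + σ * s = v := hhom _ hst.1.1 _ hen.1.1
  refine Polynomial.core (ev L R) (ev L G) (fun h => hBmem (by rw [h]; simp))
    (fun h => hGmem (by rw [h]; simp)) ρ s (wp * N) i (-(ρ + σ)) v wp hi hρn (by omega) ?_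
    (by exact_mod_cast hwp) hB (by rw [hvdef]; push_cast; ring) ?_ ?_ ?_ hsmem ?_ ?_
  · have e : v = wp * (ρ + N * (ρ + σ)) := by rw [hvdef]; push_cast; ring
    have hwp' : (0 : ℤ) < wp := by exact_mod_cast hwp
    have : 0 < (ρ : ℤ) + N * (ρ + σ) := by
      by_contra hc
      push Not at hc
      nlinarith
    rw [e]
    nlinarith
  · have e1 := ev_euler L R ρ σ v hwt
    have e2 := ev_euler L G ρ σ w hwG
    have e3 := congrArg (ev L) hJ
    simp only [Jb, map_sub, map_mul, map_pow] at e3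
    rw [show ((i : ℤ) - 1) * v - -(ρ + σ) = w by rw [hw]; ring]
    simp only [ev_pderiv_one, Int.cast_natCast] at e1 e2 e3 ⊢
    linear_combination Polynomial.C (ρ : L) * e3
      - Polynomial.derivative (ev L R) * e2 + Polynomial.derivative (ev L G) * e1
  · intro j hj
    obtain ⟨a, ha⟩ := ev_coeff_ne L R j hj
    have hsj : s ≤ j := hst.2 _ (hlead _ ha)
    refine ⟨hsj, ?_⟩
    have := hhom _ ha _ hst.1.1
    simp only at this
    have h2 : (ρ : ℤ) ∣ σ * ((j : ℤ) - s) := ⟨Qa - a, by linear_combination this⟩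
    have h3 := hcop.dvd_of_dvd_mul_left h2
    rw [← Nat.cast_sub hsj] at h3
    exact_mod_cast h3
  · have h1 : s ≤ wp * N := hst.2 _ hen.1
    rcases h1.lt_or_eq with h | h
    · exact h
    · exfalso
      apply hmono
      have hsec : ∀ q ∈ Supp R, q.2 = wp * N := fun q hq =>
        le_antisymm (hen.2 _ (hlead _ hq)) (h ▸ hst.2 _ (hlead _ hq))
      intro p hp q hq
      have e := hhom p hp q hq
      rw [hsec p hp, hsec q hq] at e
      have h2 : (ρ : ℤ) * p.1 = ρ * q.1 := by linarith
      have h3 : p.1 = q.1 := by exact_mod_cast mul_left_cancel₀ hρ.ne' h2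
      exact Prod.ext h3 ((hsec p hp).trans (hsec q hq).symm)
  · refine le_antisymm (Polynomial.natDegree_le_iff_coeff_eq_zero.2 fun j hj => ?_)
      (Polynomial.le_natDegree_of_ne_zero hBmem)
    by_contra hc
    exact absurd (hle j hc) (by omega)
  · intro j hj
    obtain ⟨a, ha⟩ := ev_coeff_ne L G j hj
    have e : (ρ : ℤ) * a + σ * j = w := hGh _ ha _ hd0'
    apply hcop.dvd_of_dvd_mul_left
    refine ⟨a - 1 - (i - 1) * Qa, ?_⟩
    linear_combination ((i : ℤ) - 1) * hsR - e - hw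

end
end

section
/- For every integer n ≥ 1, set w := x^{n+1}y^n, R := x·(w+1)^n and G := −(1/(n+1))·x²y·(w+1)^{n−1}·(w+n+1) in K[x,y]. Then R is (n,−n−1)-homogeneous and not a monomial, st_{n,−n−1}(R) = (1,0), en_{n,−n−1}(R) = (n²+n+1, n²), and [G,R] = R². Consequently the data C_0 = (1,0), C_1 = (n²+n+1,n²), R_1 = R, (ρ_1,σ_1) = (n,−n−1) form an admissible chain of length 1, so (a′,b′) := (n²+n+1, n²) is a possible A0′, and it satisfies b′ = (a′ − b′ − 1)². -/
open MvPolynomial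

noncomputable section

variable {K : Type*} [Field K] [CharZero K]

theorem R_expand (K : Type*) [Field K] [CharZero K] (n : ℕ) :
    (X 0 * ((X 0 ^ (n + 1) * X 1 ^ n : MvPolynomial (Fin 2) K) + 1) ^ n) =
    ∑ k ∈ Finset.range (n + 1), monomial
      (Finsupp.single 0 ((n + 1) * k + 1) + Finsupp.single 1 (n * k)) (n.choose k : K) := by
  rw [add_pow, Finset.mul_sum]
  refine Finset.sum_congr rfl fun k _ => ?_
  rw [one_pow, mul_one, ← mul_one (n.choose k : K), ← C_mul_monomial, add_comm,
    ← mul_one (1 : K), ← monomial_mul, ← X_pow_eq_monomial, ← X_pow_eq_monomial]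
  simp only [map_natCast]
  ring

theorem mem_Supp_R (K : Type*) [Field K] [CharZero K] (n : ℕ) (hn : 1 ≤ n) (p : ℕ × ℕ) :
    p ∈ Supp (X 0 * ((X 0 ^ (n + 1) * X 1 ^ n : MvPolynomial (Fin 2) K) + 1) ^ n) ↔
    ∃ k ≤ n, p = ((n + 1) * k + 1, n * k) := by
  have key : ∀ k : ℕ, (Finsupp.single (0 : Fin 2) ((n + 1) * k + 1) + Finsupp.single 1 (n * k)
      = Finsupp.single 0 p.1 + Finsupp.single 1 p.2) ↔ p = ((n + 1) * k + 1, n * k) := by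
    intro k
    constructor
    · intro h
      have h0 := DFunLike.congr_fun h 0
      have h1 := DFunLike.congr_fun h 1
      simp at h0 h1
      ext <;> simp [← h0, ← h1]
    · rintro rfl
      rfl
  unfold Supp
  rw [Set.mem_ofPred_eq, R_expand, coeff_sum]
  simp only [coeff_monomial, key]
  constructor
  · intro h
    obtain ⟨k, hk, hk'⟩ := Finset.exists_ne_zero_of_sum_ne_zero h
    refine ⟨k, by simpa [Nat.lt_succ_iff] using hk, ?_⟩
    by_contra hc
    exact hk' (if_neg hc)
  · rintro ⟨k, hk, rfl⟩
    rw [Finset.sum_eq_single k]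
    · simpa using (Nat.choose_pos hk).ne'
    · intro j _ hj
      refine if_neg fun h => hj ?_
      have := congrArg Prod.snd h
      exact (Nat.eq_of_mul_eq_mul_left hn this).symm
    · intro h
      exact absurd (Finset.mem_range.2 (Nat.lt_succ_of_le hk)) h

theorem homog_of_weighted {K : Type*} [Field K] [CharZero K] (a b m : ℤ)
    (P : MvPolynomial (Fin 2) K) (h : IsWeightedHomogeneous ![a, b] P m) : IsHomog a b P := by
  have key : ∀ p ∈ Supp P, a * (p.1 : ℤ) + b * (p.2 : ℤ) = m := by
    intro p hp
    have := h hp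
    rw [← this, map_add, Finsupp.weight_single, Finsupp.weight_single]
    simp [mul_comm]
  intro p hp q hq
  rw [key p hp, key q hq]

theorem homog_G (K : Type*) [Field K] [CharZero K] (n : ℕ) (c : K) :
    IsHomog (n : ℤ) (-(n : ℤ) - 1) (- (C c * X 0 ^ 2 * X 1 *
      ((X 0 ^ (n + 1) * X 1 ^ n : MvPolynomial (Fin 2) K) + 1) ^ (n - 1) *
      (X 0 ^ (n + 1) * X 1 ^ n + ((n : MvPolynomial (Fin 2) K) + 1)))) := by
  set W : Fin 2 → ℤ := ![(n : ℤ), -(n : ℤ) - 1] with hW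
  have hx : IsWeightedHomogeneous W (X 0 : MvPolynomial (Fin 2) K) (n : ℤ) :=
    isWeightedHomogeneous_X K W 0
  have hy : IsWeightedHomogeneous W (X 1 : MvPolynomial (Fin 2) K) (-(n : ℤ) - 1) :=
    isWeightedHomogeneous_X K W 1
  have hc : ∀ c : K, IsWeightedHomogeneous W (C c : MvPolynomial (Fin 2) K) 0 :=
    fun c => isWeightedHomogeneous_C W c
  have hw : IsWeightedHomogeneous W (X 0 ^ (n + 1) * X 1 ^ n : MvPolynomial (Fin 2) K) 0 := by
    have := (hx.pow (n + 1)).mul (hy.pow n)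
    convert this using 1
    simp
    ring
  have h1 : IsWeightedHomogeneous W
      ((X 0 ^ (n + 1) * X 1 ^ n : MvPolynomial (Fin 2) K) + 1) 0 := by
    have := hw.add (hc 1)
    rwa [C_1] at this
  have h2 : IsWeightedHomogeneous W
      ((X 0 ^ (n + 1) * X 1 ^ n : MvPolynomial (Fin 2) K) + ((n : MvPolynomial (Fin 2) K) + 1))
      0 := by
    have := hw.add (hc ((n : K) + 1))
    rwa [map_add, C_1, map_natCast] at this
  have h3 := ((((hc (-c)).mul (hx.pow 2)).mul hy).mul (h1.pow (n - 1))).mul h2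
  refine homog_of_weighted _ _ (0 + 2 • (n : ℤ) + (-(n : ℤ) - 1) + (n - 1) • (0 : ℤ) + 0) _ ?_
  convert h3 using 1
  rw [map_neg]
  ring

theorem bracket (K : Type*) [Field K] [CharZero K] (n : ℕ) (hn : 1 ≤ n) :
    Jb (- (C (((n : K) + 1)⁻¹) * X 0 ^ 2 * X 1 *
      ((X 0 ^ (n + 1) * X 1 ^ n : MvPolynomial (Fin 2) K) + 1) ^ (n - 1) *
      (X 0 ^ (n + 1) * X 1 ^ n + ((n : MvPolynomial (Fin 2) K) + 1))))
      (X 0 * ((X 0 ^ (n + 1) * X 1 ^ n : MvPolynomial (Fin 2) K) + 1) ^ n) =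
      (X 0 * ((X 0 ^ (n + 1) * X 1 ^ n : MvPolynomial (Fin 2) K) + 1) ^ n) ^ 2 := by
  obtain ⟨m, rfl⟩ : ∃ m, n = m + 1 := ⟨n - 1, by omega⟩
  have hc : (C ((((m + 1 : ℕ) : K) + 1)⁻¹) : MvPolynomial (Fin 2) K) *
      ((m : MvPolynomial (Fin 2) K) + 2) = 1 := by
    have h : (((m + 1 : ℕ) : K) + 1) ≠ 0 := Nat.cast_add_one_ne_zero _
    have h' : ((m : MvPolynomial (Fin 2) K) + 2) = C (((m + 1 : ℕ) : K) + 1) := by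
      simp [map_add]
      ring
    rw [h', ← C_mul, inv_mul_cancel₀ h, C_1]
  generalize ((((m + 1 : ℕ) : K) + 1)⁻¹) = c at hc ⊢
  set W : MvPolynomial (Fin 2) K := X 0 ^ (m + 1 + 1) * X 1 ^ (m + 1) with hW
  have d0 : pderiv 0 W = ((m : MvPolynomial (Fin 2) K) + 2) * X 0 ^ (m + 1) * X 1 ^ (m + 1) := by
    rw [hW]
    simp [Derivation.leibniz, Derivation.leibniz_pow, pderiv_X]
    ring
  have d1 : pderiv 1 W = ((m : MvPolynomial (Fin 2) K) + 1) * X 0 ^ (m + 2) * X 1 ^ m := by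
    rw [hW]
    simp [Derivation.leibniz, Derivation.leibniz_pow, pderiv_X]
    ring
  have e0 : pderiv 0 W * X 0 = ((m : MvPolynomial (Fin 2) K) + 2) * W := by
    rw [d0, hW]; ring
  have e1 : pderiv 1 W * X 1 = ((m : MvPolynomial (Fin 2) K) + 1) * W := by
    rw [d1, hW]; ring
  clear_value W
  have hm : ∀ i : Fin 2, pderiv i ((W + 1) ^ m) * (W + 1) =
      (m : MvPolynomial (Fin 2) K) * (W + 1) ^ m * pderiv i W := by
    intro i
    cases m with
    | zero => simp
    | succ k =>
      simp [Derivation.leibniz_pow]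
      ring
  have hAB : pderiv 0 ((W + 1) ^ m) * pderiv 1 W = pderiv 1 ((W + 1) ^ m) * pderiv 0 W := by
    simp [Derivation.leibniz_pow]
    ring
  have hA := hm 0
  have hB := hm 1
  unfold Jb
  have hW1 : (W + 1) ^ (m + 1) = (W + 1) ^ m * (W + 1) := pow_succ _ _
  simp only [Nat.add_sub_cancel, hW1]
  generalize (W + 1) ^ m = F at *
  simp [Derivation.leibniz, Derivation.leibniz_pow, pderiv_X]
  generalize pderiv 0 F = A at *
  generalize pderiv 1 F = B at *
  generalize pderiv 0 W = a at *
  generalize pderiv 1 W = b at *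
  generalize (X 0 : MvPolynomial (Fin 2) K) = x at *
  generalize (X 1 : MvPolynomial (Fin 2) K) = y at *
  generalize (C c : MvPolynomial (Fin 2) K) = c at *
  generalize (m : MvPolynomial (Fin 2) K) = m at *
  have hS : (2 * x * y * F * (W + m + 2) + x ^ 2 * y * A * (W + m + 2) + x ^ 2 * y * F * a) *
        ((m + 1) * x * F * b) -
      (F * (W + 1) + (m + 1) * x * F * a) *
        (x ^ 2 * F * (W + m + 2) + x ^ 2 * y * B * (W + m + 2) + x ^ 2 * y * F * b) =
      -(m + 2) * x ^ 2 * F ^ 2 * (W + 1) ^ 2 := by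
    linear_combination (m + 1) * x ^ 3 * y * (W + m + 2) * F * hAB -
      F * x ^ 2 * y * (W + m + 2) * hB +
      x ^ 2 * F ^ 2 * (2 * (m + 1) * (W + m + 2) - m * (W + m + 2) - (W + 1)) * e1 -
      (m + 1) * x ^ 2 * F ^ 2 * (W + m + 2) * e0
  have hRx : F * (W + 1) + x * (A * (W + 1) + F * a) =
      F * (W + 1) + (m + 1) * x * F * a := by linear_combination x * hA
  have hRy : x * (B * (W + 1) + F * b) = (m + 1) * x * F * b := by linear_combination x * hB
  rw [← hRx, ← hRy] at hS
  linear_combination (-c) * hS + x ^ 2 * F ^ 2 * (W + 1) ^ 2 * hc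

/-- Remark "caso 2": with `w = x^{n+1}y^n`, `R = x(w+1)^n` and
`G = −(1/(n+1))x²y(w+1)^{n−1}(w+n+1)`, the polynomial `R` is
`(n,−n−1)`-homogeneous, not a monomial, `st = (1,0)`, `en = (n²+n+1, n²)`,
`[G,R] = R²`; consequently `(n²+n+1, n²)` is a possible `A₀′`, and it attains
equality `b' = (a'−b'−1)²`. -/
theorem stmt17 (K : Type*) [Field K] [CharZero K] (n : ℕ) (hn : 1 ≤ n) :
    let w : MvPolynomial (Fin 2) K := MvPolynomial.X 0 ^ (n + 1) * MvPolynomial.X 1 ^ n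
    let R : MvPolynomial (Fin 2) K := MvPolynomial.X 0 * (w + 1) ^ n
    let G : MvPolynomial (Fin 2) K :=
      - (MvPolynomial.C (((n : K) + 1)⁻¹) * MvPolynomial.X 0 ^ 2 * MvPolynomial.X 1 *
          (w + 1) ^ (n - 1) * (w + ((n : MvPolynomial (Fin 2) K) + 1)))
    IsHomog (n : ℤ) (-(n : ℤ) - 1) R ∧ ¬ IsMonomial R ∧
      IsSt (n : ℤ) (-(n : ℤ) - 1) R (1, 0) ∧
      IsEn (n : ℤ) (-(n : ℤ) - 1) R (n ^ 2 + n + 1, n ^ 2) ∧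
      Jb G R = R ^ 2 ∧
      PossibleA0 K (n ^ 2 + n + 1, n ^ 2) ∧
      (n ^ 2 : ℤ) = (((n ^ 2 + n + 1 : ℕ) : ℤ) - ((n ^ 2 : ℕ) : ℤ) - 1) ^ 2 := by
  intro w R G
  have hS : ∀ p, p ∈ Supp R ↔ ∃ k ≤ n, p = ((n + 1) * k + 1, n * k) := mem_Supp_R K n hn
  have hval : ∀ p ∈ Supp R, (n : ℤ) * (p.1 : ℤ) + (-(n : ℤ) - 1) * (p.2 : ℤ) = n := by
    intro p hp
    obtain ⟨k, _, rfl⟩ := (hS p).1 hp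
    push_cast
    ring
  have m0 : ((1, 0) : ℕ × ℕ) ∈ Supp R := (hS _).2 ⟨0, Nat.zero_le _, by simp⟩
  have m1 : ((n ^ 2 + n + 1, n ^ 2) : ℕ × ℕ) ∈ Supp R :=
    (hS _).2 ⟨n, le_rfl, by ext <;> simp <;> ring⟩
  have hdeg : wdeg (n : ℤ) (-(n : ℤ) - 1) R = n := by
    have : {d : ℤ | ∃ p ∈ Supp R, d = (n : ℤ) * (p.1 : ℤ) + (-(n : ℤ) - 1) * (p.2 : ℤ)}
        = {(n : ℤ)} := by
      ext d
      constructor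
      · rintro ⟨p, hp, rfl⟩
        exact hval p hp
      · rintro rfl
        exact ⟨_, m0, (hval _ m0).symm⟩
    unfold wdeg
    rw [this, csSup_singleton]
  have hL : ∀ p ∈ Supp R, p ∈ LeadSupp (n : ℤ) (-(n : ℤ) - 1) R :=
    fun p hp => ⟨hp, by rw [hval p hp, hdeg]⟩
  have hhom : IsHomog (n : ℤ) (-(n : ℤ) - 1) R :=
    fun p hp q hq => by rw [hval p hp, hval q hq]
  have hmono : ¬ IsMonomial R := by
    intro h
    have := congrArg Prod.snd (h m0 m1)
    have h2 : 0 < n ^ 2 := by positivity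
    simp at this
    omega
  have hst : IsSt (n : ℤ) (-(n : ℤ) - 1) R (1, 0) := ⟨hL _ m0, fun q _ => Nat.zero_le _⟩
  have hen : IsEn (n : ℤ) (-(n : ℤ) - 1) R (n ^ 2 + n + 1, n ^ 2) := by
    refine ⟨hL _ m1, fun q hq => ?_⟩
    obtain ⟨k, hk, rfl⟩ := (hS q).1 hq.1
    simp only [pow_two]
    exact Nat.mul_le_mul_left n hk
  have hJ : Jb G R = R ^ 2 := bracket K n hn
  have hGh : IsHomog (n : ℤ) (-(n : ℤ) - 1) G := homog_G K n _
  refine ⟨hhom, hmono, hst, hen, hJ, ?_, by push_cast; ring⟩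
  refine ⟨1, {
    C := fun j => if j = 0 then (1, 0) else (n ^ 2 + n + 1, n ^ 2)
    Rp := fun _ => R
    dir := fun _ => ((n : ℤ), -(n : ℤ) - 1)
    hdir := fun j _ _ => ⟨?_, by simp; omega, by simp only []; omega⟩
    hC0 := ⟨1, le_rfl, by simp⟩
    hincr := fun j _ _ => by omega
    hhom := fun j _ _ => hhom
    hmono := fun j _ _ => hmono
    hst := fun j h1 h2 => by
      obtain rfl : j = 1 := by omega
      simpa using hst
    hen := fun j h1 h2 => by
      obtain rfl : j = 1 := by omega
      simpa using hen
    hdiag := fun j h1 h2 => by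
      obtain rfl : j = 1 := by omega
      simp
    hval := fun j h1 h2 => by
      obtain rfl : j = 1 := by omega
      exact (hval _ m1).ge
    hG := fun j _ _ => ⟨G, 2, by norm_num, hGh, hJ⟩ }, by simp⟩
  rw [← Int.isCoprime_iff_gcd_eq_one]
  exact ⟨-1, -1, by ring⟩

end
end

section
/- Let C_0,…,C_k, R_1,…,R_k, (ρ_1,σ_1),…,(ρ_k,σ_k) form an admissible chain of length k, and write C_j = (a_j,b_j) for 0 ≤ j ≤ k. Then the sequences (a_j), (b_j) and (a_j − b_j) are strictly increasing in j: for every 1 ≤ j ≤ k one has a_{j−1} < a_j, b_{j−1} < b_j and a_{j−1} − b_{j−1} < a_j − b_j. In particular a_j ≥ 1, b_j ≥ 1 and a_j − b_j ≥ 1 for all 1 ≤ j ≤ k. -/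
open MvPolynomial

noncomputable section

variable {K : Type*} [Field K] [CharZero K]

/-- Remark "los B_is crecen": along an admissible chain the sequences `a_j`, `b_j`
and `a_j − b_j` are strictly increasing, and `a_j, b_j, a_j − b_j ≥ 1` for
`1 ≤ j ≤ k`. -/
theorem stmt18 (K : Type*) [Field K] [CharZero K] (k : ℕ) (ch : AdmChain K k) :
    ∀ j, 1 ≤ j → j ≤ k →
      ((ch.C (j - 1)).1 < (ch.C j).1 ∧
       (ch.C (j - 1)).2 < (ch.C j).2 ∧
       ((ch.C (j - 1)).1 : ℤ) - ((ch.C (j - 1)).2 : ℤ)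
         < ((ch.C j).1 : ℤ) - ((ch.C j).2 : ℤ)) ∧
      (1 ≤ (ch.C j).1 ∧ 1 ≤ (ch.C j).2 ∧ (ch.C j).2 < (ch.C j).1) := by
  intro j h1 hk
  obtain ⟨-, hρ, hρσ⟩ := ch.hdir j h1 hk
  have hhom := ch.hhom j h1 hk
  have hmono := ch.hmono j h1 hk
  obtain ⟨⟨hsS, hsd⟩, hsmin⟩ := ch.hst j h1 hk
  obtain ⟨⟨heS, hed⟩, hemax⟩ := ch.hen j h1 hk
  have hdiag := ch.hdiag j h1 hk
  generalize (ch.dir j).1 = ρ at *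
  generalize (ch.dir j).2 = σ at *
  generalize ch.C (j - 1) = s at *
  generalize ch.C j = e at *
  have hlead : ∀ p ∈ Supp (ch.Rp j), p ∈ LeadSupp ρ σ (ch.Rp j) :=
    fun p hp => ⟨hp, (hhom p hp s hsS).trans hsd⟩
  have hb : s.2 < e.2 := by
    by_contra hcon
    apply hmono
    intro p hp q hq
    have e1 := hsmin p (hlead p hp)
    have e2 := hemax p (hlead p hp)
    have e3 := hsmin q (hlead q hq)
    have e4 := hemax q (hlead q hq)
    have h2 : p.2 = q.2 := by omega
    have h := hhom p hp q hq
    rw [h2] at h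
    have h3 : (p.1 : ℤ) = q.1 := mul_left_cancel₀ hρ.ne' (by linarith)
    exact Prod.ext (by exact_mod_cast h3) h2
  have heq := hhom s hsS e heS
  have hbz : (s.2 : ℤ) < e.2 := by exact_mod_cast hb
  have hd : (s.1 : ℤ) - s.2 < e.1 - e.2 := by
    by_contra hcon
    push Not at hcon
    nlinarith [mul_le_mul_of_nonneg_left hcon hρ.le,
      mul_pos (sub_pos.2 hbz) (neg_pos.2 hρσ)]
  refine ⟨⟨?_, hb, hd⟩, ?_, ?_, hdiag⟩ <;> omega

end
end
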